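/- arXiv:1206.4132 — 5 statements merged into one kernel-verified Lean document; each statement's English description precedes it below -/
import Mathlib

section
/- Let M be a C^∞-smooth real hypersurface germ at the origin in ℂ² defined by ρ(z₁,z₂) = Re z₁ + P(z₂) + (Im z₁)·Q(z₂, Im z₁) = 0, where P and Q are C^∞-smooth with P(0)=0, dP(0)=0, Q(0,0)=0. Assume that the Wirtinger derivatives satisfy (∂^N P/∂z₂^N)(0) = 0 for every nonnegative integer N (i.e., no finite-order jet of P contains a nonzero harmonic term). Then the origin is a point of D'Angelo infinite type of M if and only if P(z₂) vanishes to infinite order at z₂ = 0 (all partial derivatives of P of all orders vanish at 0). -/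
/-!
If `P` is flat at `0`, the line `t ↦ (0, t)` has infinite order of contact.

Conversely, let `P` vanish to finite order `m`, and suppose a disc `h = (u, v)` with `ν(h) = k`
satisfies `ν(ρ ∘ h) > m k`. Then `Re u + P(v) + S = o(t ^ (m k))`, where `S`, the value of
`Im z₁ · Q(z₂, Im z₁)` along the disc, is `o(u)`, and `P(v) = O(v ^ m)`.

* If `u` has smaller order than `v ^ m`, then all terms except `Re u` are `o(u)`, so
  `Re u = o(u)`. As `u` is an open map near `0`, this gives `Re w = o(w)` as `w → 0`, which is
  false.
* Otherwise `u = γ v ^ m + o(v ^ m)` for a constant `γ`, hence `P(v) + Re (γ v ^ m) = o(v ^ m)`.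
  As `v` is an open map near `0`, `P(z) + Re (γ z ^ m) = o(z ^ m)`. Taking `∂^m/∂z^m` at `0`
  gives `γ = 0`, so `P = o(z ^ m)`, contradicting the choice of `m`.

That a smooth `o(z ^ n)` has vanishing derivatives up to order `n` is proved by interpolation
(Landau's inequality bounds each derivative by its neighbours), which avoids the symmetry of
higher derivatives.
-/

open Complex Metric Filter Topology Asymptotics

/-- The Wirtinger derivative ∂f/∂z = (1/2)(∂f/∂x - i ∂f/∂y) of a function f : ℂ → ℂ. -/
noncomputable def wirtinger (f : ℂ → ℂ) (z : ℂ) : ℂ :=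
  (1 / 2) * (fderiv ℝ f z 1 - Complex.I * fderiv ℝ f z Complex.I)

/-- The Wirtinger derivative of a real-valued function on ℂ. -/
noncomputable def wirtingerR (f : ℂ → ℝ) (z : ℂ) : ℂ :=
  wirtinger (fun w => (f w : ℂ)) z

/-- Iterated Wirtinger derivative ∂^N/∂z^N. -/
noncomputable def wirtingerIter : ℕ → (ℂ → ℂ) → (ℂ → ℂ)
  | 0, f => f
  | n + 1, f => wirtinger (wirtingerIter n f)

/-- The Wirtinger derivative of ρ : ℂ × ℂ → ℝ in the first variable. -/
noncomputable def wirtinger1 (ρ : ℂ × ℂ → ℝ) (z : ℂ × ℂ) : ℂ :=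
  wirtinger (fun w => (ρ (w, z.2) : ℂ)) z.1

/-- The Wirtinger derivative of ρ : ℂ × ℂ → ℝ in the second variable. -/
noncomputable def wirtinger2 (ρ : ℂ × ℂ → ℝ) (z : ℂ × ℂ) : ℂ :=
  wirtinger (fun w => (ρ (z.1, w) : ℂ)) z.2

/-- The vanishing order ν(f) of a smooth function at 0: the least n such that the n-th
derivative of f at 0 is nonzero, and +∞ if all derivatives vanish at 0. -/
noncomputable def vanishOrder {E : Type*} [NormedAddCommGroup E] [NormedSpace ℝ E]
    (f : ℂ → E) : ℕ∞ :=
  sInf {m : ℕ∞ | ∃ n : ℕ, m = (n : ℕ∞) ∧ iteratedFDeriv ℝ n f 0 ≠ 0}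

/-- The origin is a point of D'Angelo infinite type for the hypersurface {ρ = 0}:
for every ℓ > 0 there is a holomorphic disc h through 0 with ν(h) finite and
ν(ρ ∘ h) / ν(h) > ℓ. -/
def IsInfiniteType (ρ : ℂ × ℂ → ℝ) : Prop :=
  ∀ ℓ : ℕ, 0 < ℓ → ∃ h : ℂ → ℂ × ℂ,
    DifferentiableOn ℂ h (Metric.ball 0 1) ∧ h 0 = 0 ∧
    vanishOrder h ≠ ⊤ ∧ (ℓ : ℕ∞) * vanishOrder h < vanishOrder (fun t => ρ (h t))

section Taylor

set_option maxSynthPendingDepth 3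

variable {E F : Type*} [NormedAddCommGroup E] [NormedSpace ℝ E]
  [NormedAddCommGroup F] [NormedSpace ℝ F] {f : E → F} {x₀ : E} {n : ℕ}

theorem isBigO_norm_pow_succ_of_fderiv_isBigO (hf : ∀ᶠ x in 𝓝 x₀, DifferentiableAt ℝ f x)
    (hf₀ : f x₀ = 0) (hf' : fderiv ℝ f =O[𝓝 x₀] fun x => ‖x - x₀‖ ^ n) :
    f =O[𝓝 x₀] fun x => ‖x - x₀‖ ^ (n + 1) := by
  obtain ⟨C, hC₀, hC⟩ := hf'.exists_pos
  obtain ⟨R, hR, hball⟩ := Metric.eventually_nhds_iff_ball.1 (hC.bound.and hf)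
  refine IsBigO.of_bound C ?_
  filter_upwards [ball_mem_nhds x₀ hR] with x hx
  have hsub : closedBall x₀ ‖x - x₀‖ ⊆ ball x₀ R :=
    closedBall_subset_ball (by rwa [← dist_eq_norm])
  have hbound : ∀ w ∈ closedBall x₀ ‖x - x₀‖, ‖fderiv ℝ f w‖ ≤ C * ‖x - x₀‖ ^ n := by
    intro w hw
    refine (hball w (hsub hw)).1.trans ?_
    rw [norm_pow, norm_norm]
    gcongr
    rwa [← dist_eq_norm]
  calc ‖f x‖ = ‖f x - f x₀‖ := by rw [hf₀, sub_zero]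
    _ ≤ C * ‖x - x₀‖ ^ n * ‖x - x₀‖ :=
      (convex_closedBall x₀ ‖x - x₀‖).norm_image_sub_le_of_norm_fderiv_le
        (fun w hw => (hball w (hsub hw)).2) hbound (mem_closedBall_self (norm_nonneg _))
        (mem_closedBall.2 (dist_eq_norm x x₀).le)
    _ = C * ‖‖x - x₀‖ ^ (n + 1)‖ := by rw [norm_pow, norm_norm, pow_succ, mul_assoc]

theorem eventually_differentiableAt_iteratedFDeriv (hf : ContDiffAt ℝ n f x₀) {k : ℕ}
    (hk : k < n) : ∀ᶠ x in 𝓝 x₀, DifferentiableAt ℝ (iteratedFDeriv ℝ k f) x :=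
  (hf.eventually (by simp)).mono fun _ hx => hx.differentiableAt_iteratedFDeriv (mod_cast hk)

theorem iteratedFDeriv_isBigO_of_iteratedFDeriv_eq_zero (hf : ContDiffAt ℝ n f x₀)
    (h : ∀ j < n, iteratedFDeriv ℝ j f x₀ = 0) {k : ℕ} (hk : k ≤ n) :
    iteratedFDeriv ℝ k f =O[𝓝 x₀] fun x => ‖x - x₀‖ ^ (n - k) := by
  induction hk using Nat.decreasingInduction with
  | self =>
    simpa using (hf.continuousAt_iteratedFDeriv le_rfl).isBigO_one ℝ
  | of_succ k hk ih =>
    rw [show n - k = n - (k + 1) + 1 by lia]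
    refine isBigO_norm_pow_succ_of_fderiv_isBigO
      (eventually_differentiableAt_iteratedFDeriv hf hk) (h k hk) (IsBigO.of_norm_left ?_)
    simpa only [norm_fderiv_iteratedFDeriv] using ih.norm_left

theorem isBigO_norm_pow_of_iteratedFDeriv_eq_zero (hf : ContDiffAt ℝ n f x₀)
    (h : ∀ j < n, iteratedFDeriv ℝ j f x₀ = 0) : f =O[𝓝 x₀] fun x => ‖x - x₀‖ ^ n := by
  refine IsBigO.of_norm_left ?_
  simpa only [norm_iteratedFDeriv_zero, Nat.sub_zero] using
    (iteratedFDeriv_isBigO_of_iteratedFDeriv_eq_zero hf h n.zero_le).norm_left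

theorem norm_fderiv_le_of_norm_le_of_norm_fderiv_fderiv_le {z : E} {A K r : ℝ} (hr : 0 < r)
    (hf : ∀ w ∈ closedBall z r, DifferentiableAt ℝ f w)
    (hf' : ∀ w ∈ closedBall z r, DifferentiableAt ℝ (fderiv ℝ f) w)
    (hA : ∀ w ∈ closedBall z r, ‖f w‖ ≤ A)
    (hK : ∀ w ∈ closedBall z r, ‖fderiv ℝ (fderiv ℝ f) w‖ ≤ K) :
    ‖fderiv ℝ f z‖ ≤ K * r + 2 * A / r := by
  have hz : z ∈ closedBall z r := mem_closedBall_self hr.le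
  have hA₀ : 0 ≤ A := (norm_nonneg _).trans (hA z hz)
  have hK₀ : 0 ≤ K := (norm_nonneg _).trans (hK z hz)
  have hconv : Convex ℝ (closedBall z r) := convex_closedBall z r
  have hosc : ∀ w ∈ closedBall z r, ‖fderiv ℝ f w - fderiv ℝ f z‖ ≤ K * r := fun w hw =>
    (hconv.norm_image_sub_le_of_norm_fderiv_le hf' hK hz hw).trans <| by
      gcongr
      rwa [← dist_eq_norm]
  refine ContinuousLinearMap.opNorm_le_of_unit_norm (by positivity) fun v hv => ?_
  have hw : z + r • v ∈ closedBall z r := by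
    simp [norm_smul, hv, abs_of_pos hr]
  have hrem : ‖f (z + r • v) - f z - r • fderiv ℝ f z v‖ ≤ K * r * r := by
    simpa [norm_smul, hv, abs_of_pos hr] using
      hconv.norm_image_sub_le_of_norm_fderiv_le' hf hosc hz hw
  have hr' : r * ‖fderiv ℝ f z v‖ ≤ K * r * r + 2 * A := by
    calc r * ‖fderiv ℝ f z v‖ = ‖r • fderiv ℝ f z v‖ := by
          rw [norm_smul, Real.norm_of_nonneg hr.le]
      _ = ‖f (z + r • v) - f z - (f (z + r • v) - f z - r • fderiv ℝ f z v)‖ := by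
          rw [sub_sub_cancel]
      _ ≤ ‖f (z + r • v)‖ + ‖f z‖ + ‖f (z + r • v) - f z - r • fderiv ℝ f z v‖ :=
          (norm_sub_le _ _).trans (by gcongr; exact norm_sub_le _ _)
      _ ≤ A + A + K * r * r := by gcongr; exacts [hA _ hw, hA _ hz]
      _ = K * r * r + 2 * A := by ring
  calc ‖fderiv ℝ f z v‖ ≤ (K * r * r + 2 * A) / r := (le_div_iff₀' hr).2 hr'
    _ = K * r + 2 * A / r := by field_simp

theorem exists_pos_le_one_mul_le {K ε : ℝ} (hK : 0 < K) (hε : 0 < ε) :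
    ∃ δ, 0 < δ ∧ δ ≤ 1 ∧ K * δ ≤ ε :=
  ⟨min 1 (ε / K), by positivity, min_le_left _ _, (le_div_iff₀' hK).1 (min_le_right _ _)⟩

theorem fderiv_isLittleO_of_isLittleO (hf : ∀ᶠ x in 𝓝 x₀, DifferentiableAt ℝ f x)
    (hf' : ∀ᶠ x in 𝓝 x₀, DifferentiableAt ℝ (fderiv ℝ f) x)
    (ho : f =o[𝓝 x₀] fun x => ‖x - x₀‖ ^ (n + 2))
    (hO : fderiv ℝ (fderiv ℝ f) =O[𝓝 x₀] fun x => ‖x - x₀‖ ^ n) :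
    fderiv ℝ f =o[𝓝 x₀] fun x => ‖x - x₀‖ ^ (n + 1) := by
  -- Landau's inequality on the ball of radius `δ ‖x - x₀‖`: for fixed `δ`, both terms are
  -- `O(δ ‖x - x₀‖ ^ (n + 1))` once `‖f‖ ≤ δ² ‖· - x₀‖ ^ (n + 2)`.
  obtain ⟨C, hC₀, hC⟩ := hO.exists_pos
  refine IsLittleO.of_bound fun ε hε => ?_
  obtain ⟨δ, hδ₀, hδ₁, hδε⟩ :=
    exists_pos_le_one_mul_le (K := C * 2 ^ n + 2 ^ (n + 3)) (by positivity) hε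
  obtain ⟨R, hR, hball⟩ := Metric.eventually_nhds_iff_ball.1
    ((hf.and hf').and ((ho.def (pow_pos hδ₀ 2)).and hC.bound))
  filter_upwards [ball_mem_nhds x₀ (half_pos hR)] with x hx
  rcases eq_or_ne x x₀ with rfl | hne
  · simp [(ho.isBigO.hasFDerivAt (by lia)).fderiv]
  have hr : 0 < ‖x - x₀‖ := norm_sub_pos_iff.2 hne
  have hx : ‖x - x₀‖ < R / 2 := by rwa [← dist_eq_norm]
  have hnorm : ∀ w ∈ closedBall x (δ * ‖x - x₀‖), ‖w - x₀‖ ≤ 2 * ‖x - x₀‖ := fun w hw => by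
    have := norm_sub_le_norm_sub_add_norm_sub w x x₀
    rw [mem_closedBall, dist_eq_norm] at hw
    nlinarith
  have hsub : closedBall x (δ * ‖x - x₀‖) ⊆ ball x₀ R := fun w hw => by
    rw [mem_ball, dist_eq_norm]
    linarith [hnorm w hw]
  calc ‖fderiv ℝ f x‖
      ≤ C * (2 * ‖x - x₀‖) ^ n * (δ * ‖x - x₀‖) +
          2 * (δ ^ 2 * (2 * ‖x - x₀‖) ^ (n + 2)) / (δ * ‖x - x₀‖) := by
        refine norm_fderiv_le_of_norm_le_of_norm_fderiv_fderiv_le (by positivity)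
          (fun w hw => (hball w (hsub hw)).1.1) (fun w hw => (hball w (hsub hw)).1.2)
          (fun w hw => (hball w (hsub hw)).2.1.trans ?_)
          (fun w hw => (hball w (hsub hw)).2.2.trans ?_) <;>
        · rw [norm_pow, norm_norm]
          gcongr
          exact hnorm w hw
    _ = (C * 2 ^ n + 2 ^ (n + 3)) * δ * ‖x - x₀‖ ^ (n + 1) := by field_simp; ring
    _ ≤ ε * ‖‖x - x₀‖ ^ (n + 1)‖ := by rw [norm_pow, norm_norm]; gcongr

theorem norm_fderiv_linearIsometryEquiv_comp {G : Type*} [NormedAddCommGroup G] [NormedSpace ℝ G]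
    (e : F ≃ₗᵢ[ℝ] G) (f : E → F) (x : E) : ‖fderiv ℝ (e ∘ f) x‖ = ‖fderiv ℝ f x‖ := by
  rw [e.comp_fderiv]
  exact e.toLinearIsometry.norm_toContinuousLinearMap_comp

theorem norm_fderiv_fderiv_iteratedFDeriv (k : ℕ) (x : E) :
    ‖fderiv ℝ (fderiv ℝ (iteratedFDeriv ℝ k f)) x‖ = ‖iteratedFDeriv ℝ (k + 2) f x‖ := by
  rw [fderiv_iteratedFDeriv, norm_fderiv_linearIsometryEquiv_comp, norm_fderiv_iteratedFDeriv]

theorem iteratedFDeriv_isLittleO_of_isLittleO (hf : ContDiffAt ℝ n f x₀)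
    (h : ∀ j < n, iteratedFDeriv ℝ j f x₀ = 0) (ho : f =o[𝓝 x₀] fun x => ‖x - x₀‖ ^ n) {k : ℕ}
    (hk : k < n) : iteratedFDeriv ℝ k f =o[𝓝 x₀] fun x => ‖x - x₀‖ ^ (n - k) := by
  induction k with
  | zero =>
    refine IsLittleO.of_norm_left ?_
    simpa only [norm_iteratedFDeriv_zero, Nat.sub_zero] using ho.norm_left
  | succ k ih =>
    have hdiff : ∀ᶠ x in 𝓝 x₀, DifferentiableAt ℝ (fderiv ℝ (iteratedFDeriv ℝ k f)) x := by
      simp only [fderiv_iteratedFDeriv, LinearIsometryEquiv.comp_differentiableAt_iff]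
      exact eventually_differentiableAt_iteratedFDeriv hf hk
    have hO := iteratedFDeriv_isBigO_of_iteratedFDeriv_eq_zero hf h (k := k + 2) hk
    specialize ih (by lia)
    rw [show n - k = n - (k + 2) + 2 by lia] at ih
    rw [show n - (k + 1) = n - (k + 2) + 1 by lia]
    refine IsLittleO.of_norm_left ?_
    simp only [← norm_fderiv_iteratedFDeriv]
    refine (fderiv_isLittleO_of_isLittleO
      (eventually_differentiableAt_iteratedFDeriv hf (by lia)) hdiff ih
      (IsBigO.of_norm_left ?_)).norm_left
    simpa only [norm_fderiv_fderiv_iteratedFDeriv] using hO.norm_left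

theorem iteratedFDeriv_eq_zero_of_isLittleO (hf : ContDiffAt ℝ n f x₀)
    (ho : f =o[𝓝 x₀] fun x => ‖x - x₀‖ ^ n) {k : ℕ} (hk : k ≤ n) :
    iteratedFDeriv ℝ k f x₀ = 0 := by
  induction n generalizing k with
  | zero =>
    obtain rfl := Nat.le_zero.1 hk
    simp only [pow_zero] at ho
    have : f x₀ = 0 :=
      tendsto_nhds_unique hf.continuousAt ((isLittleO_one_iff ℝ).1 ho)
    simpa [← norm_eq_zero] using this
  | succ n ih =>
    have hlt : ∀ j < n + 1, iteratedFDeriv ℝ j f x₀ = 0 := fun j hj =>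
      ih (hf.of_le (mod_cast n.le_succ))
        (ho.trans (isLittleO_pow_sub_pow_sub x₀ n.lt_succ_self)) (Nat.lt_succ_iff.1 hj)
    rcases hk.lt_or_eq with hk | rfl
    · exact hlt k hk
    have hderiv : HasFDerivAt (iteratedFDeriv ℝ n f) (0 : E →L[ℝ] E [×n]→L[ℝ] F) x₀ := by
      refine .of_isLittleO ?_
      simpa [hlt n n.lt_succ_self] using
        (iteratedFDeriv_isLittleO_of_isLittleO hf hlt ho n.lt_succ_self)
    rw [← norm_eq_zero, ← norm_fderiv_iteratedFDeriv, hderiv.fderiv, norm_zero]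

end Taylor

section Wirtinger

set_option maxSynthPendingDepth 3

/-- The Wirtinger derivative `wirtinger f z` as a real-linear functional of the Fréchet derivative
`fderiv ℝ f z`. -/
noncomputable def wirtingerCLM : (ℂ →L[ℝ] ℂ) →L[ℝ] ℂ :=
  (1 / 2 : ℂ) • (ContinuousLinearMap.apply ℝ ℂ (1 : ℂ) -
    Complex.I • ContinuousLinearMap.apply ℝ ℂ Complex.I)

/-- The iterated Wirtinger derivative `wirtingerIter n f z` as a real-linear functional of the
Fréchet derivative `iteratedFDeriv ℝ n f z`. -/
noncomputable def wirtingerIterCLM : (n : ℕ) → (ℂ [×n]→L[ℝ] ℂ) →L[ℝ] ℂ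
  | 0 => ContinuousMultilinearMap.apply ℝ (fun _ : Fin 0 => ℂ) ℂ ![]
  | n + 1 => wirtingerCLM ∘L
      ContinuousLinearMap.compL ℝ ℂ (ℂ [×n]→L[ℝ] ℂ) ℂ (wirtingerIterCLM n) ∘L
      (continuousMultilinearCurryLeftEquiv ℝ (fun _ : Fin (n + 1) => ℂ) ℂ
        |>.toContinuousLinearEquiv : (ℂ [×(n + 1)]→L[ℝ] ℂ) →L[ℝ] (ℂ →L[ℝ] ℂ [×n]→L[ℝ] ℂ))

theorem wirtinger_eq_wirtingerCLM (f : ℂ → ℂ) (z : ℂ) :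
    wirtinger f z = wirtingerCLM (fderiv ℝ f z) := by
  simp [wirtinger, wirtingerCLM]

theorem wirtingerIter_eq_wirtingerIterCLM {n : ℕ} {f : ℂ → ℂ} {z : ℂ} (hf : ContDiffAt ℝ n f z) :
    wirtingerIter n f z = wirtingerIterCLM n (iteratedFDeriv ℝ n f z) := by
  induction n generalizing z with
  | zero => rfl
  | succ n ih =>
    have hev : wirtingerIter n f =ᶠ[𝓝 z] wirtingerIterCLM n ∘ iteratedFDeriv ℝ n f := by
      filter_upwards [hf.eventually (by simp)] with w hw
      exact ih (hw.of_le (mod_cast n.le_succ))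
    have hdiff : DifferentiableAt ℝ (iteratedFDeriv ℝ n f) z :=
      hf.differentiableAt_iteratedFDeriv (mod_cast n.lt_succ_self)
    rw [wirtingerIter, wirtinger_eq_wirtingerCLM, hev.fderiv_eq, fderiv_comp z
      (wirtingerIterCLM n).differentiableAt hdiff, ContinuousLinearMap.fderiv,
      fderiv_iteratedFDeriv]
    simp [wirtingerIterCLM]

theorem wirtinger_eq_deriv {f : ℂ → ℂ} {z : ℂ} (hf : DifferentiableAt ℂ f z) :
    wirtinger f z = deriv f z := by
  rw [wirtinger, (hf.hasDerivAt.hasFDerivAt.restrictScalars ℝ).fderiv]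
  simp only [one_div, ContinuousLinearMap.coe_restrictScalars',
    ContinuousLinearMap.toSpanSingleton_apply, smul_eq_mul, one_mul]
  linear_combination (-(1 / 2) * deriv f z) * Complex.I_mul_I

theorem wirtinger_ofReal_re {g : ℂ → ℂ} {z : ℂ} (hg : DifferentiableAt ℂ g z) :
    wirtinger (fun w => ((g w).re : ℂ)) z = deriv g z / 2 := by
  have h := (ofRealCLM ∘L reCLM).hasFDerivAt.comp z
    (hg.hasDerivAt.hasFDerivAt.restrictScalars ℝ)
  rw [wirtinger, show fderiv ℝ (fun w => ((g w).re : ℂ)) z = _ from h.fderiv]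
  apply Complex.ext <;> simp <;> ring

theorem wirtingerIter_succ_ofReal_re {g : ℂ → ℂ} (hg : Differentiable ℂ g) (n : ℕ) :
    wirtingerIter (n + 1) (fun z => ((g z).re : ℂ)) = fun z => iteratedDeriv (n + 1) g z / 2 := by
  induction n with
  | zero =>
    funext z
    rw [iteratedDeriv_one]
    exact wirtinger_ofReal_re (hg z)
  | succ n ih =>
    funext z
    have hd : DifferentiableAt ℂ (iteratedDeriv (n + 1) g) z :=
      (hg.contDiff (n := ⊤)).differentiable_iteratedDeriv (n + 1) (by simp) z
    rw [wirtingerIter, ih, wirtinger_eq_deriv (hd.div_const 2), deriv_div_const,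
      ← iteratedDeriv_succ]

theorem wirtingerIter_ofReal_re_const_mul_pow (γ : ℂ) {m : ℕ} (hm : m ≠ 0) :
    wirtingerIter m (fun z => ((γ * z ^ m).re : ℂ)) 0 = γ * m.factorial / 2 := by
  obtain ⟨n, rfl⟩ := Nat.exists_eq_add_one_of_ne_zero hm
  have hdiff : Differentiable ℂ fun z => γ * z ^ (n + 1) := by fun_prop
  simp only [wirtingerIter_succ_ofReal_re hdiff, iteratedDeriv_const_mul_field,
    iteratedDeriv_fun_pow_zero, ↓reduceIte]

theorem wirtingerIter_add {n : ℕ} {f g : ℂ → ℂ} {z : ℂ} (hf : ContDiffAt ℝ n f z)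
    (hg : ContDiffAt ℝ n g z) :
    wirtingerIter n (fun w => f w + g w) z = wirtingerIter n f z + wirtingerIter n g z := by
  rw [wirtingerIter_eq_wirtingerIterCLM (hf.add hg), fun_iteratedFDeriv_add_apply hf hg, map_add,
    ← wirtingerIter_eq_wirtingerIterCLM hf, ← wirtingerIter_eq_wirtingerIterCLM hg]

theorem wirtingerIter_eq_zero_of_isLittleO {n : ℕ} {f : ℂ → ℂ} {z : ℂ} (hf : ContDiffAt ℝ n f z)
    (ho : f =o[𝓝 z] fun w => ‖w - z‖ ^ n) : wirtingerIter n f z = 0 := by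
  rw [wirtingerIter_eq_wirtingerIterCLM hf, iteratedFDeriv_eq_zero_of_isLittleO hf ho le_rfl,
    map_zero]

theorem eq_zero_of_add_re_isLittleO {P : ℂ → ℝ} {γ : ℂ} {m : ℕ} (hm : m ≠ 0)
    (hP : ContDiffAt ℝ m P 0) (hharm : wirtingerIter m (fun z => (P z : ℂ)) 0 = 0)
    (ho : (fun z => P z + (γ * z ^ m).re) =o[𝓝 0] fun z => z ^ m) : γ = 0 := by
  have hPc : ContDiffAt ℝ m (fun z => (P z : ℂ)) 0 := ofRealCLM.contDiff.contDiffAt.comp 0 hP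
  have hre : ContDiffAt ℝ m (fun z : ℂ => ((γ * z ^ m).re : ℂ)) 0 := by
    refine ((ofRealCLM ∘L reCLM).contDiff.comp (f := fun z => γ * z ^ m) ?_).contDiffAt
    fun_prop
  have hzero := wirtingerIter_eq_zero_of_isLittleO (hPc.add hre) <| by
    simpa only [← ofReal_add, isLittleO_ofReal_left, sub_zero, ← norm_pow] using ho.norm_right
  rw [wirtingerIter_add hPc hre, hharm, zero_add,
    wirtingerIter_ofReal_re_const_mul_pow γ hm] at hzero
  simpa [m.factorial_ne_zero] using hzero

end Wirtinger

section VanishOrder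

open scoped ContDiff

variable {E : Type*} [NormedAddCommGroup E] [NormedSpace ℝ E] {f g : ℂ → E} {n : ℕ}

theorem natCast_lt_vanishOrder_iff :
    (n : ℕ∞) < vanishOrder f ↔ ∀ k ≤ n, iteratedFDeriv ℝ k f 0 = 0 := by
  simp only [← ENat.add_one_le_iff (ENat.natCast_ne_top n), vanishOrder, le_sInf_iff]
  refine ⟨fun h k hk => by_contra fun hne => ?_, ?_⟩
  · have hle : n + 1 ≤ k := mod_cast h k ⟨k, rfl, hne⟩
    lia
  · rintro h _ ⟨k, rfl, hne⟩
    by_contra hk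
    exact hne (h k (by norm_cast at hk; lia))

theorem vanishOrder_eq_top_iff : vanishOrder f = ⊤ ↔ ∀ n, iteratedFDeriv ℝ n f 0 = 0 := by
  rw [ENat.eq_top_iff_forall_gt]
  simp only [natCast_lt_vanishOrder_iff]
  exact ⟨fun h n => h n n le_rfl, fun h n k _ => h k⟩

theorem vanishOrder_congr (h : f =ᶠ[𝓝 0] g) : vanishOrder f = vanishOrder g := by
  simp only [vanishOrder, fun n => (h.iteratedFDeriv ℝ n).eq_of_nhds]

theorem vanishOrder_pos (hf : f 0 = 0) : 0 < vanishOrder f := by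
  rw [← Nat.cast_zero, natCast_lt_vanishOrder_iff]
  intro k hk
  rw [Nat.le_zero.1 hk, ← norm_eq_zero, norm_iteratedFDeriv_zero, hf, norm_zero]

theorem isBigO_pow_of_natCast_le_vanishOrder (hf : ContDiffAt ℝ n f 0) (h : n ≤ vanishOrder f) :
    f =O[𝓝 0] fun z => z ^ n := by
  refine IsBigO.of_norm_right ?_
  simpa using isBigO_norm_pow_of_iteratedFDeriv_eq_zero hf fun j hj =>
    natCast_lt_vanishOrder_iff.1 ((ENat.natCast_lt_natCast.2 hj).trans_le h) j le_rfl

theorem natCast_lt_vanishOrder_iff_isLittleO (hf : ContDiffAt ℝ ∞ f 0) :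
    (n : ℕ∞) < vanishOrder f ↔ f =o[𝓝 0] fun z => z ^ n := by
  refine ⟨fun h => ?_, fun h => natCast_lt_vanishOrder_iff.2 fun k hk => ?_⟩
  · have hO : f =O[𝓝 0] fun z => z ^ (n + 1) := isBigO_pow_of_natCast_le_vanishOrder
      (hf.of_le (mod_cast le_top)) (by simpa using Order.add_one_le_of_lt h)
    exact hO.trans_isLittleO (isLittleO_pow_pow n.lt_succ_self)
  · refine iteratedFDeriv_eq_zero_of_isLittleO (hf.of_le (mod_cast le_top)) ?_ hk
    simpa using h.norm_right

end VanishOrder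

section AnalyticOrder

variable {𝕜 E : Type*} [NontriviallyNormedField 𝕜] [NormedAddCommGroup E] [NormedSpace 𝕜 E]
  {z₀ : 𝕜} {n : ℕ}

theorem isBigO_pow_of_natCast_le_analyticOrderAt {f : 𝕜 → E} (hf : AnalyticAt 𝕜 f z₀)
    (h : n ≤ analyticOrderAt f z₀) : f =O[𝓝 z₀] fun z => (z - z₀) ^ n := by
  obtain ⟨φ, hφ, hfφ⟩ := (natCast_le_analyticOrderAt hf).1 h
  refine IsBigO.congr' ?_ (hfφ.mono fun _ => Eq.symm) .rfl
  simpa using (isBigO_refl (fun z => (z - z₀) ^ n) (𝓝 z₀)).smul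
    (hφ.continuousAt.isBigO_one 𝕜)

theorem isLittleO_pow_of_natCast_lt_analyticOrderAt {f : 𝕜 → E} (hf : AnalyticAt 𝕜 f z₀)
    (h : n < analyticOrderAt f z₀) : f =o[𝓝 z₀] fun z => (z - z₀) ^ n := by
  have hO := isBigO_pow_of_natCast_le_analyticOrderAt (n := n + 1) hf
    (by simpa using Order.add_one_le_of_lt h)
  refine hO.trans_isLittleO ?_
  simpa only [← norm_pow, isLittleO_norm_norm] using isLittleO_pow_sub_pow_sub z₀ n.lt_succ_self

theorem pow_isBigO_of_analyticOrderAt_le {f : 𝕜 → E} (hf : AnalyticAt 𝕜 f z₀)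
    (h : analyticOrderAt f z₀ ≤ n) : (fun z => (z - z₀) ^ n) =O[𝓝 z₀] f := by
  obtain ⟨a, ha⟩ := ENat.ne_top_iff_exists.1 (ne_top_of_le_ne_top (ENat.natCast_ne_top n) h)
  obtain ⟨φ, hφ, hφ₀, hfφ⟩ := hf.analyticOrderAt_eq_natCast.1 ha.symm
  have han : a ≤ n := by rwa [← ha, Nat.cast_le] at h
  have hone : (fun _ => (1 : 𝕜)) =O[𝓝 z₀] φ := by
    rw [isBigO_const_left_iff_pos_le_norm one_ne_zero]
    exact ⟨‖φ z₀‖ / 2, by positivity, hφ.continuousAt.norm.eventually_const_le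
      (half_lt_self (norm_pos_iff.2 hφ₀))⟩
  have hpow : (fun z => (z - z₀) ^ (n - a)) =O[𝓝 z₀] fun _ => (1 : 𝕜) :=
    Tendsto.isBigO_one 𝕜 (ContinuousAt.tendsto (by fun_prop))
  refine (((isBigO_refl (fun z => (z - z₀) ^ a) (𝓝 z₀)).smul (hpow.trans hone))).congr' ?_
    (hfφ.mono fun _ => Eq.symm)
  exact .of_forall fun z => by simp only [smul_eq_mul, ← pow_add, Nat.add_sub_cancel' han]

theorem isLittleO_of_analyticOrderAt_lt {f g : 𝕜 → E} (hf : AnalyticAt 𝕜 f z₀)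
    (hg : AnalyticAt 𝕜 g z₀) (h : analyticOrderAt f z₀ < analyticOrderAt g z₀) :
    g =o[𝓝 z₀] f := by
  obtain ⟨n, hn⟩ := ENat.ne_top_iff_exists.1 h.ne_top
  rw [← hn] at h
  exact (isLittleO_pow_of_natCast_lt_analyticOrderAt hg h).trans_isBigO
    (pow_isBigO_of_analyticOrderAt_le hf hn.ge)

theorem exists_sub_const_mul_isLittleO {f g : 𝕜 → 𝕜} (hf : AnalyticAt 𝕜 f z₀)
    (hg : AnalyticAt 𝕜 g z₀) (hg' : analyticOrderAt g z₀ ≠ ⊤)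
    (h : analyticOrderAt g z₀ ≤ analyticOrderAt f z₀) :
    ∃ γ : 𝕜, (fun z => f z - γ * g z) =o[𝓝 z₀] g := by
  obtain ⟨n, hn⟩ := ENat.ne_top_iff_exists.1 hg'
  obtain ⟨ψ, hψ, hψ₀, hgψ⟩ := hg.analyticOrderAt_eq_natCast.1 hn.symm
  obtain ⟨φ, hφ, hfφ⟩ := (natCast_le_analyticOrderAt hf).1 (hn ▸ h)
  refine ⟨φ z₀ / ψ z₀, IsLittleO.trans_isBigO ?_ (pow_isBigO_of_analyticOrderAt_le hg hn.ge)⟩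
  have hzero : (fun z => φ z - φ z₀ / ψ z₀ * ψ z) =o[𝓝 z₀] fun _ => (1 : 𝕜) := by
    rw [isLittleO_one_iff]
    have : ContinuousAt (fun z => φ z - φ z₀ / ψ z₀ * ψ z) z₀ :=
      hφ.continuousAt.sub (hψ.continuousAt.const_mul _)
    simpa [ContinuousAt, hψ₀] using this
  refine IsLittleO.congr' ((isBigO_refl (fun z => (z - z₀) ^ n) _).mul_isLittleO hzero) ?_
    (.of_forall fun z => mul_one _)
  filter_upwards [hfφ, hgψ] with z hz hz'
  rw [hz, hz', smul_eq_mul, smul_eq_mul]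
  ring

theorem map_nhds_eq_nhds_zero {u : ℂ → ℂ} {z₀ : ℂ} (hu : AnalyticAt ℂ u z₀) (hu₀ : u z₀ = 0)
    (hu' : analyticOrderAt u z₀ ≠ ⊤) : map u (𝓝 z₀) = 𝓝 0 := by
  refine le_antisymm (hu₀ ▸ hu.continuousAt) ?_
  rcases hu.eventually_constant_or_nhds_le_map_nhds with h | h
  · exact absurd (analyticOrderAt_eq_top.2 (by simpa only [hu₀] using h)) hu'
  · rwa [hu₀] at h

theorem frequently_nhds_ne {X : Type*} [TopologicalSpace X] (x : X) [(𝓝[≠] x).NeBot] :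
    ∃ᶠ y in 𝓝 x, y ≠ x :=
  (eventually_mem_nhdsWithin (a := x) (s := {x}ᶜ)).frequently.filter_mono nhdsWithin_le_nhds

theorem not_re_isLittleO {u : ℂ → ℂ} {z₀ : ℂ} (hu : AnalyticAt ℂ u z₀) (hu₀ : u z₀ = 0)
    (hu' : analyticOrderAt u z₀ ≠ ⊤) : ¬ (fun z => (u z).re) =o[𝓝 z₀] u := by
  intro h
  have hre : re =o[𝓝 0] fun w => w := by
    rwa [← map_nhds_eq_nhds_zero hu hu₀ hu', isLittleO_map]
  have hreal : (fun x : ℝ => x) =o[𝓝 0] fun x : ℝ => (x : ℂ) := by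
    simpa [Function.comp_def] using hre.comp_tendsto (continuous_ofReal.tendsto 0)
  exact isLittleO_irrefl (frequently_nhds_ne 0) (isLittleO_ofReal_right.1 hreal)

theorem min_analyticOrderAt_le_vanishOrder {h : ℂ → ℂ × ℂ} (hh : AnalyticAt ℂ h 0) :
    min (analyticOrderAt (fun t => (h t).1) 0) (analyticOrderAt (fun t => (h t).2) 0) ≤
      vanishOrder h := by
  have hfst : AnalyticAt ℂ (fun t => (h t).1) 0 := analyticAt_fst.comp hh
  have hsnd : AnalyticAt ℂ (fun t => (h t).2) 0 := analyticAt_snd.comp hh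
  refine le_of_forall_lt fun c hc => ?_
  obtain ⟨n, rfl⟩ := ENat.ne_top_iff_exists.1 hc.ne_top
  rw [lt_min_iff] at hc
  rw [natCast_lt_vanishOrder_iff_isLittleO hh.restrictScalars.contDiffAt]
  have hfst' := isLittleO_pow_of_natCast_lt_analyticOrderAt hfst hc.1
  have hsnd' := isLittleO_pow_of_natCast_lt_analyticOrderAt hsnd hc.2
  simpa only [sub_zero] using hfst'.prod_left hsnd'

end AnalyticOrder

section Hypersurface

open scoped ContDiff

variable {P : ℂ → ℝ} {R : ℂ × ℂ → ℝ} {u v : ℂ → ℂ} {S : ℂ → ℝ} {t₀ : ℂ} {m : ℕ}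

theorem not_re_add_comp_add_isLittleO (hu : AnalyticAt ℂ u t₀) (hu₀ : u t₀ = 0)
    (hv : AnalyticAt ℂ v t₀) (hv₀ : v t₀ = 0) (hP : P =O[𝓝 0] fun z => z ^ m) (hS : S =o[𝓝 t₀] u)
    (horder : analyticOrderAt u t₀ < analyticOrderAt (v ^ m) t₀) :
    ¬ (fun t => (u t).re + P (v t) + S t) =o[𝓝 t₀] u := by
  intro h
  have hPv : (P ∘ v) =o[𝓝 t₀] u :=
    (hP.comp_tendsto (hv₀ ▸ hv.continuousAt.tendsto)).trans_isLittleO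
      (isLittleO_of_analyticOrderAt_lt hu (hv.pow m) horder)
  refine not_re_isLittleO hu hu₀ horder.ne_top (((h.sub hPv).sub hS).congr_left fun t => ?_)
  simp only [Function.comp_apply]
  ring

theorem exists_add_re_isLittleO (hu : AnalyticAt ℂ u t₀) (hv : AnalyticAt ℂ v t₀) (hv₀ : v t₀ = 0)
    (hv' : analyticOrderAt v t₀ ≠ ⊤) (hS : S =o[𝓝 t₀] u)
    (horder : analyticOrderAt (v ^ m) t₀ ≤ analyticOrderAt u t₀)
    (h : (fun t => (u t).re + P (v t) + S t) =o[𝓝 t₀] (v ^ m)) :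
    ∃ γ : ℂ, (fun z => P z + (γ * z ^ m).re) =o[𝓝 0] fun z => z ^ m := by
  have hvm : analyticOrderAt (v ^ m) t₀ ≠ ⊤ := by
    rw [analyticOrderAt_pow hv, nsmul_eq_mul]
    exact WithTop.mul_ne_top (ENat.natCast_ne_top m) hv'
  obtain ⟨γ, hγ⟩ := exists_sub_const_mul_isLittleO hu (hv.pow m) hvm horder
  have huO : u =O[𝓝 t₀] (v ^ m) :=
    (hγ.isBigO.add (isBigO_const_mul_self γ _ _)).congr_left fun t => sub_add_cancel _ _
  have hre : (fun t => (u t - γ * (v ^ m) t).re) =o[𝓝 t₀] (v ^ m) :=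
    (reCLM.isBigO_comp _ _).trans_isLittleO hγ
  refine ⟨γ, ?_⟩
  rw [← map_nhds_eq_nhds_zero hv hv₀ hv', isLittleO_map]
  refine ((h.sub hre).sub (hS.trans_isBigO huO)).congr_left fun t => ?_
  simp only [Function.comp_apply, Pi.pow_apply, sub_re]
  ring

theorem min_analyticOrderAt_pow_le (hv : AnalyticAt ℂ v t₀) (hm : m ≠ 0) :
    min (analyticOrderAt u t₀) (analyticOrderAt (v ^ m) t₀) ≤
      m * min (analyticOrderAt u t₀) (analyticOrderAt v t₀) := by
  have hm' : (1 : ℕ∞) ≤ m := mod_cast Nat.one_le_iff_ne_zero.2 hm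
  rw [analyticOrderAt_pow hv, nsmul_eq_mul, (mul_right_mono (a := (m : ℕ∞))).map_min]
  exact min_le_min_right _ (le_mul_of_one_le_left' hm')

theorem natCast_lt_vanishOrder_of_comp_isLittleO {n : ℕ} (hP : ContDiffAt ℝ ∞ P 0)
    (hharm : wirtingerIter m (fun z => (P z : ℂ)) 0 = 0) (hm₀ : m ≠ 0) (hm : m ≤ vanishOrder P)
    (hu : AnalyticAt ℂ u 0) (hu₀ : u 0 = 0) (hv : AnalyticAt ℂ v 0) (hv₀ : v 0 = 0)
    (hS : S =o[𝓝 0] u) (hn : min (analyticOrderAt u 0) (analyticOrderAt (v ^ m) 0) ≤ n)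
    (ho : (fun t => (u t).re + P (v t) + S t) =o[𝓝 0] fun t => t ^ n) :
    m < vanishOrder P := by
  have ho_of_le {w : ℂ → ℂ} (hw : AnalyticAt ℂ w 0) (hwn : analyticOrderAt w 0 ≤ n) :
      (fun t => (u t).re + P (v t) + S t) =o[𝓝 0] w :=
    ho.trans_isBigO (by simpa only [sub_zero] using pow_isBigO_of_analyticOrderAt_le hw hwn)
  rcases lt_or_ge (analyticOrderAt u 0) (analyticOrderAt (v ^ m) 0) with horder | horder
  · rw [min_eq_left horder.le] at hn
    have hPO := isBigO_pow_of_natCast_le_vanishOrder (hP.of_le (mod_cast le_top)) hm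
    exact absurd (ho_of_le hu hn) (not_re_add_comp_add_isLittleO hu hu₀ hv hv₀ hPO hS horder)
  · rw [min_eq_right horder] at hn
    have hv' : analyticOrderAt v 0 ≠ ⊤ := fun htop => by
      simp [analyticOrderAt_pow hv, htop, hm₀] at hn
    obtain ⟨γ, hγ⟩ := exists_add_re_isLittleO hu hv hv₀ hv' hS horder (ho_of_le (hv.pow m) hn)
    obtain rfl := eq_zero_of_add_re_isLittleO hm₀ (hP.of_le (mod_cast le_top)) hharm hγ
    exact (natCast_lt_vanishOrder_iff_isLittleO hP).2 (by simpa using hγ)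

theorem vanishOrder_comp_le_mul (hP : ContDiffAt ℝ ∞ P 0) (hPν : vanishOrder P ≠ ⊤)
    (hharm : ∀ N, wirtingerIter N (fun z => (P z : ℂ)) 0 = 0)
    (hR : ContDiffAt ℝ ∞ R 0) (hRo : R =o[𝓝 0] Prod.fst)
    {h : ℂ → ℂ × ℂ} (hh : AnalyticAt ℂ h 0) (hh₀ : h 0 = 0) (hhν : vanishOrder h ≠ ⊤) :
    vanishOrder (fun t => (h t).1.re + P (h t).2 + R (h t)) ≤ vanishOrder P * vanishOrder h := by
  obtain ⟨m, hm⟩ := ENat.ne_top_iff_exists.1 hPν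
  obtain ⟨k, hk⟩ := ENat.ne_top_iff_exists.1 hhν
  have hm₀ : m ≠ 0 := by
    simpa [← hm, pos_iff_ne_zero] using vanishOrder_pos (ofReal_eq_zero.1 (hharm 0))
  by_contra! hlt
  have hu : AnalyticAt ℂ (fun t => (h t).1) 0 := analyticAt_fst.comp hh
  have hv : AnalyticAt ℂ (fun t => (h t).2) 0 := analyticAt_snd.comp hh
  have hu₀ : (h 0).1 = 0 := by rw [hh₀, Prod.fst_zero]
  have hv₀ : (h 0).2 = 0 := by rw [hh₀, Prod.snd_zero]
  have hRh : (fun t => R (h t)) =o[𝓝 0] fun t => (h t).1 :=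
    hRo.comp_tendsto (hh₀ ▸ hh.continuousAt.tendsto)
  have hsmooth : ContDiffAt ℝ ∞ (fun t => (h t).1.re + P (h t).2 + R (h t)) 0 :=
    ((reCLM.contDiff.contDiffAt.comp 0 hu.restrictScalars.contDiffAt).add
      (ContDiffAt.comp 0 (by rwa [hv₀]) hv.restrictScalars.contDiffAt)).add
      (ContDiffAt.comp 0 (by rwa [hh₀]) hh.restrictScalars.contDiffAt)
  have hcontact : (fun t => (h t).1.re + P (h t).2 + R (h t)) =o[𝓝 0] fun t => t ^ (m * k) := by
    rw [← natCast_lt_vanishOrder_iff_isLittleO hsmooth]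
    simpa [hm, hk] using hlt
  have hmin : min (analyticOrderAt (fun t => (h t).1) 0)
      (analyticOrderAt ((fun t => (h t).2) ^ m) 0) ≤ (m * k : ℕ) := by
    rw [Nat.cast_mul, hk]
    exact (min_analyticOrderAt_pow_le hv hm₀).trans
      (mul_le_mul_right (min_analyticOrderAt_le_vanishOrder hh) (m : ℕ∞))
  exact hm.not_lt (natCast_lt_vanishOrder_of_comp_isLittleO hP (hharm m) hm₀ hm.le
    hu hu₀ hv hv₀ hRh hmin hcontact)

theorem vanishOrder_zero_prodMk_id_ne_top : vanishOrder (fun t : ℂ => ((0 : ℂ), t)) ≠ ⊤ := by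
  intro htop
  have ho : (fun t : ℂ => ((0 : ℂ), t)) =o[𝓝 0] fun t => t ^ 1 :=
    (natCast_lt_vanishOrder_iff_isLittleO (by fun_prop)).1 (htop ▸ ENat.natCast_lt_top 1)
  have hid : (fun t : ℂ => t) =o[𝓝 0] fun t => t := by
    simpa only [pow_one] using ho.prod_left_snd
  exact isLittleO_irrefl (frequently_nhds_ne 0) hid

theorem eventually_prodMk_zero_eq_zero (hRo : R =o[𝓝 0] Prod.fst) :
    (fun t : ℂ => R (0, t)) =ᶠ[𝓝 0] 0 :=
  isLittleO_zero_right_iff.1 <| hRo.comp_tendsto (k := fun t : ℂ => ((0 : ℂ), t)) <|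
    Continuous.tendsto' (by fun_prop) 0 0 rfl

theorem contDiff_im_mul {Q : ℂ × ℝ → ℝ} {n : WithTop ℕ∞} (hQ : ContDiff ℝ n Q) :
    ContDiff ℝ n fun z : ℂ × ℂ => z.1.im * Q (z.2, z.1.im) := by
  have him : ContDiff ℝ n fun z : ℂ × ℂ => z.1.im := imCLM.contDiff.comp contDiff_fst
  exact him.mul (hQ.comp (contDiff_snd.prodMk him))

theorem im_mul_isLittleO_fst {Q : ℂ × ℝ → ℝ} (hQ : ContinuousAt Q 0) (hQ₀ : Q 0 = 0) :
    (fun z : ℂ × ℂ => z.1.im * Q (z.2, z.1.im)) =o[𝓝 0] Prod.fst := by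
  have him : (fun z : ℂ × ℂ => z.1.im) =O[𝓝 0] Prod.fst := imCLM.isBigO_comp _ _
  have hQo : (fun z : ℂ × ℂ => Q (z.2, z.1.im)) =o[𝓝 0] fun _ => (1 : ℝ) := by
    rw [isLittleO_one_iff]
    have hlim : Tendsto (fun z : ℂ × ℂ => (z.2, z.1.im)) (𝓝 0) (𝓝 0) :=
      Continuous.tendsto' (by fun_prop) _ _ (by simp)
    exact (hQ₀ ▸ hQ.tendsto).comp hlim
  simpa using him.norm_right.mul_isLittleO hQo

theorem statement0_general (hP : ContDiffAt ℝ ∞ P 0)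
    (hharm : ∀ N, wirtingerIter N (fun z => (P z : ℂ)) 0 = 0)
    (hR : ContDiffAt ℝ ∞ R 0) (hRo : R =o[𝓝 0] Prod.fst) :
    IsInfiniteType (fun z => z.1.re + P z.2 + R z) ↔ ∀ n, iteratedFDeriv ℝ n P 0 = 0 := by
  rw [← vanishOrder_eq_top_iff]
  refine ⟨fun hinf => by_contra fun hPν => ?_, fun hflat ℓ _ => ?_⟩
  · obtain ⟨m, hm⟩ := ENat.ne_top_iff_exists.1 hPν
    have hm₀ : 0 < m := by
      simpa [← hm] using vanishOrder_pos (ofReal_eq_zero.1 (hharm 0))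
    obtain ⟨h, hdiff, hh₀, hhν, hlt⟩ := hinf m hm₀
    have hh : AnalyticAt ℂ h 0 := hdiff.analyticAt (ball_mem_nhds 0 one_pos)
    rw [hm] at hlt
    exact hlt.not_ge (vanishOrder_comp_le_mul hP hPν hharm hR hRo hh hh₀ hhν)
  · refine ⟨fun t => (0, t), by fun_prop, rfl, vanishOrder_zero_prodMk_id_ne_top, ?_⟩
    have hcongr : (fun t => (0 : ℂ).re + P t + R (0, t)) =ᶠ[𝓝 0] P := by
      filter_upwards [eventually_prodMk_zero_eq_zero hRo] with t ht
      rw [ht, zero_re, zero_add, Pi.zero_apply, add_zero]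
    rw [vanishOrder_congr hcongr, hflat]
    exact WithTop.mul_lt_top (ENat.natCast_lt_top ℓ)
      vanishOrder_zero_prodMk_id_ne_top.lt_top

end Hypersurface

/-- **Theorem 2 (Kim–Ninh).** Let M be the smooth real hypersurface germ at 0 in ℂ² defined by
ρ(z₁,z₂) = Re z₁ + P(z₂) + (Im z₁) Q(z₂, Im z₁) = 0, where P, Q are C^∞ with P(0)=0, dP(0)=0,
Q(0,0)=0, and all iterated Wirtinger derivatives ∂^N P/∂z₂^N vanish at 0. Then 0 is a point of
infinite type if and only if P vanishes to infinite order at 0. -/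
theorem statement0 (P : ℂ → ℝ) (Q : ℂ × ℝ → ℝ)
    (hPsm : ContDiff ℝ (⊤ : ℕ∞) P) (hQsm : ContDiff ℝ (⊤ : ℕ∞) Q)
    (hP0 : P 0 = 0) (hdP0 : fderiv ℝ P 0 = 0) (hQ0 : Q (0, 0) = 0)
    (hharm : ∀ N : ℕ, wirtingerIter N (fun z => (P z : ℂ)) 0 = 0) :
    IsInfiniteType (fun z : ℂ × ℂ => z.1.re + P z.2 + z.1.im * Q (z.2, z.1.im)) ↔
      (∀ n : ℕ, iteratedFDeriv ℝ n P 0 = 0) := by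
  exact statement0_general hPsm.contDiffAt hharm (contDiff_im_mul hQsm).contDiffAt
    (im_mul_isLittleO_fst hQsm.continuous.continuousAt hQ0)
end

section
/- Let M be a C^∞-smooth real hypersurface germ at the origin in ℂ² with defining function ρ(z₁,z₂) = Re z₁ + P(z₂) + (Im z₁)·Q(z₂, Im z₁), where P and Q are C^∞-smooth with P(0)=0, dP(0)=0, Q(0,0)=0. If the D'Angelo type τ(M,0) = +∞, then there exists a sequence {aₙ}_{n=2}^∞ of complex numbers such that for each integer N ≥ 2 the holomorphic curve φ_N(t) = (−Σ_{j=2}^N a_j t^j, t) satisfies ν(ρ∘φ_N) ≥ N, where ν denotes the vanishing order at t = 0. -/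
/-!
Let `p` be holomorphic with `p 0 = 0`, and suppose that `ρ (p t, t)` vanishes to order `N`, with
homogeneous part `R` of degree `N`. Since `ρ` agrees with `Re z₁` to first order,
`ρ (z₁ + g, w) = ρ (z₁, w) + Re g + o(g)`. Infinite type provides a holomorphic disc `(u, w)` of
multiplicity `k` with contact of order greater than `k N`, and `w = b t ^ k + ⋯` with `b ≠ 0`.
Comparing it with `(p ∘ w, w)` shows that `p ∘ w - u = e t ^ (k N) + ⋯` and that
`R (b ζ ^ k) = Re (e ζ ^ (k N))`. As every complex number is of the form `b ζ ^ k`, it follows that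
`R x = Re (c x ^ N)` for some `c`, and replacing `p` by `p - c t ^ N` raises the vanishing order to
`N + 1`.
-/

open Complex Metric Filter Topology Asymptotics

open scoped ContDiff Nat

universe u v

lemma isBigO_norm_pow_norm_pow {E : Type*} [SeminormedAddCommGroup E] {m n : ℕ} (h : m ≤ n) :
    (fun y : E ↦ ‖y‖ ^ n) =O[𝓝 0] fun y ↦ ‖y‖ ^ m := by
  rcases h.eq_or_lt with rfl | h
  exacts [isBigO_refl _ _, (isLittleO_norm_pow_norm_pow h).isBigO]

section Taylor

variable {E F : Type*} [NormedAddCommGroup E] [NormedSpace ℝ E] [NormedAddCommGroup F]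
  [NormedSpace ℝ F]

/-- `f` has radial term `T` of degree `m` when `T ζ = lim f (s ζ) / s ^ m` as `s → 0⁺` along
every ray. -/
def HasRadialTerm (f : E → F) (m : ℕ) (T : E → F) : Prop :=
  ∀ ζ, Tendsto (fun s : ℝ ↦ (s ^ m)⁻¹ • f (s • ζ)) (𝓝[>] 0) (𝓝 (T ζ))

lemma tendsto_smul_nhdsGT_zero (ζ : E) : Tendsto (fun s : ℝ ↦ s • ζ) (𝓝[>] 0) (𝓝 0) := by
  have h : Continuous fun s : ℝ ↦ s • ζ := by fun_prop
  simpa using (h.tendsto 0).mono_left nhdsWithin_le_nhds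

namespace HasRadialTerm

variable {f g : E → F} {T S : E → F} {m : ℕ}

lemma unique (hT : HasRadialTerm f m T) (hS : HasRadialTerm f m S) : T = S :=
  funext fun ζ ↦ tendsto_nhds_unique (hT ζ) (hS ζ)

lemma add (hf : HasRadialTerm f m T) (hg : HasRadialTerm g m S) :
    HasRadialTerm (f + g) m (T + S) := fun ζ ↦ by
  simpa only [Pi.add_apply, smul_add] using (hf ζ).add (hg ζ)

lemma of_isLittleO (hf : f =o[𝓝 0] fun y ↦ ‖y‖ ^ m) : HasRadialTerm f m 0 := fun ζ ↦ by
  have h : (fun s : ℝ ↦ ‖s • ζ‖ ^ m) =O[𝓝[>] 0] fun s ↦ s ^ m :=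
    .of_bound (‖ζ‖ ^ m) (.of_forall fun s ↦ by simp [norm_smul, mul_pow, mul_comm])
  exact ((hf.comp_tendsto (tendsto_smul_nhdsGT_zero ζ)).trans_isBigO h).tendsto_inv_smul_nhds_zero

lemma of_homogeneous (hf : ∀ (s : ℝ) x, f (s • x) = s ^ m • f x) : HasRadialTerm f m f :=
  fun ζ ↦ by
    refine tendsto_const_nhds.congr' ?_
    filter_upwards [self_mem_nhdsWithin] with s hs
    rw [hf, inv_smul_smul₀ (pow_ne_zero m (ne_of_gt hs))]

lemma comp_homogeneous {G : Type*} [NormedAddCommGroup G] [NormedSpace ℝ G] {R : F → G} {N : ℕ}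
    (hf : HasRadialTerm f m T) (hR : Continuous R)
    (hhom : ∀ (s : ℝ) x, R (s • x) = s ^ N • R x) :
    HasRadialTerm (R ∘ f) (m * N) (R ∘ T) := fun ζ ↦ by
  refine ((hR.tendsto _).comp (hf ζ)).congr fun s ↦ ?_
  rw [Function.comp_apply, hhom, inv_pow, pow_mul, Function.comp_apply]

end HasRadialTerm

lemma norm_apply_diagonal_le {n : ℕ} (M : E [×n]→L[ℝ] F) (y : E) :
    ‖M fun _ ↦ y‖ ≤ ‖M‖ * ‖y‖ ^ n := by
  simpa using M.le_opNorm fun _ ↦ y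

lemma taylor_remainder_isBigO [CompleteSpace F] {f : E → F} {x : E} {n : ℕ}
    (hf : ContDiffAt ℝ (n + 1) f x) :
    (fun y ↦ f (x + y) - ∑ k ∈ Finset.range (n + 1), (k ! : ℝ)⁻¹ • iteratedFDeriv ℝ k f x fun _ ↦ y)
      =O[𝓝 0] fun y ↦ ‖y‖ ^ (n + 1) := by
  set D := iteratedFDeriv ℝ (n + 1) f
  have hsmooth : ∀ᶠ y in 𝓝 x, ContDiffAt ℝ (n + 1) f y := hf.eventually (by simp)
  have hbound : ∀ᶠ y in 𝓝 x, ‖D y‖ < ‖D x‖ + 1 :=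
    (hf.continuousAt_iteratedFDeriv le_rfl).norm.eventually_lt_const (lt_add_one _)
  obtain ⟨r, hr, hball⟩ := eventually_nhds_iff_ball.1 (hsmooth.and hbound)
  refine .of_bound ((n ! : ℝ)⁻¹ * (‖D x‖ + 1)) ?_
  filter_upwards [ball_mem_nhds (0 : E) hr] with y hy
  have hsegment : ∀ t ∈ Set.Icc (0 : ℝ) 1, x + t • y ∈ ball x r := fun t ht ↦ by
    rw [mem_ball_zero_iff] at hy
    rw [mem_ball_iff_norm, add_sub_cancel_left, norm_smul, Real.norm_of_nonneg ht.1]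
    exact (mul_le_of_le_one_left (norm_nonneg y) ht.2).trans_lt hy
  have hintegrand : ∀ t ∈ Set.uIoc (0 : ℝ) 1,
      ‖(1 - t) ^ n • D (x + t • y) fun _ ↦ y‖ ≤ (‖D x‖ + 1) * ‖y‖ ^ (n + 1) := fun t ht ↦ by
    rw [Set.uIoc_of_le zero_le_one] at ht
    have hweight : ‖(1 - t) ^ n‖ ≤ 1 := by
      rw [norm_pow, Real.norm_of_nonneg (by linarith [ht.2])]
      exact pow_le_one₀ (by linarith [ht.2]) (by linarith [ht.1])
    calc ‖(1 - t) ^ n • D (x + t • y) fun _ ↦ y‖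
        = ‖(1 - t) ^ n‖ * ‖D (x + t • y) fun _ ↦ y‖ := norm_smul _ _
      _ ≤ 1 * (‖D (x + t • y)‖ * ‖y‖ ^ (n + 1)) := by
          gcongr
          exact norm_apply_diagonal_le _ y
      _ ≤ (‖D x‖ + 1) * ‖y‖ ^ (n + 1) := by
          rw [one_mul]
          gcongr
          exact (hball _ (hsegment t (Set.Ioc_subset_Icc_self ht))).2.le
  rw [map_add_eq_sum_add_integral_iteratedFDeriv fun t ht ↦ (hball _ (hsegment t ht)).1,
    add_sub_cancel_left, norm_smul, norm_inv, Real.norm_natCast, norm_pow, norm_norm, mul_assoc]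
  gcongr
  simpa using intervalIntegral.norm_integral_le_of_norm_le_const hintegrand

lemma exists_homogeneous_sub_isBigO [CompleteSpace F] {f : E → F} {n : ℕ}
    (hf : ContDiffAt ℝ (n + 1) f 0) (hlow : ∀ k < n, iteratedFDeriv ℝ k f 0 = 0) :
    ∃ R : E → F, Continuous R ∧ (∀ (s : ℝ) x, R (s • x) = s ^ n • R x) ∧
      (fun y ↦ f y - R y) =O[𝓝 0] fun y ↦ ‖y‖ ^ (n + 1) := by
  set M := iteratedFDeriv ℝ n f 0
  refine ⟨fun y ↦ (n ! : ℝ)⁻¹ • M fun _ ↦ y, ?_, fun s x ↦ ?_, ?_⟩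
  · exact (M.cont.comp (continuous_pi fun _ ↦ continuous_id)).const_smul _
  · change _ • M (fun _ ↦ s • x) = _
    rw [M.map_smul_univ (fun _ ↦ s) fun _ ↦ x, Fin.prod_const, smul_comm]
  · refine (taylor_remainder_isBigO hf).congr_left fun y ↦ ?_
    have hsum : ∑ k ∈ Finset.range n, (k ! : ℝ)⁻¹ • iteratedFDeriv ℝ k f 0 (fun _ ↦ y) = 0 :=
      Finset.sum_eq_zero fun k hk ↦ by simp [hlow k (Finset.mem_range.1 hk)]
    rw [Finset.sum_range_succ, hsum, zero_add, zero_add]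

lemma isBigO_of_iteratedFDeriv_eq_zero [CompleteSpace F] {f : E → F} {n : ℕ}
    (hf : ContDiffAt ℝ n f 0) (hlow : ∀ k < n, iteratedFDeriv ℝ k f 0 = 0) :
    f =O[𝓝 0] fun y ↦ ‖y‖ ^ n := by
  cases n with
  | zero => simpa using hf.continuousAt.isBigO_one ℝ
  | succ n =>
    refine (taylor_remainder_isBigO (n := n) (mod_cast hf)).congr_left fun y ↦ ?_
    rw [Finset.sum_eq_zero fun k hk ↦ by simp [hlow k (Finset.mem_range.1 hk)], zero_add, sub_zero]

lemma hasFDerivAt_rescale {f : E → F} {s : ℝ} {y : E} {n : ℕ} (hs : s ≠ 0)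
    (hf : DifferentiableAt ℝ f (s • y)) :
    HasFDerivAt (fun x ↦ (s ^ (n + 1))⁻¹ • f (s • x)) ((s ^ n)⁻¹ • fderiv ℝ f (s • y)) y := by
  have h := (hf.hasFDerivAt.comp y ((hasFDerivAt_id y).const_smul s)).const_smul (s ^ (n + 1))⁻¹
  refine h.congr_fderiv ?_
  have hpow : (s ^ (n + 1))⁻¹ * s = (s ^ n)⁻¹ := by
    rw [pow_succ, mul_inv, inv_mul_cancel_right₀ hs]
  rw [ContinuousLinearMap.comp_smul, ContinuousLinearMap.comp_id, smul_smul, hpow]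

-- The rescalings `s⁻⁽ⁿ⁺¹⁾ f(s ·)` tend to `0` pointwise while their derivatives tend to `L` locally
-- uniformly, so `L` is the derivative of `0`.
lemma eq_zero_of_fderiv_sub_isLittleO {f : E → F} {L : E → E →L[ℝ] F} {n : ℕ}
    (hdiff : ∀ᶠ y in 𝓝 0, DifferentiableAt ℝ f y)
    (hf : f =o[𝓝 0] fun y ↦ ‖y‖ ^ (n + 1))
    (hL : ∀ (s : ℝ) x, L (s • x) = s ^ n • L x)
    (hfL : (fun y ↦ fderiv ℝ f y - L y) =o[𝓝 0] fun y ↦ ‖y‖ ^ n) : L = 0 := by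
  funext x
  have hscale : Tendsto (fun q : ℝ × E ↦ q.1 • q.2) (𝓝[>] 0 ×ˢ 𝓝 x) (𝓝 0) := by
    have : ContinuousAt (fun q : ℝ × E ↦ q.1 • q.2) (0, x) := by fun_prop
    have h := this.tendsto
    rw [zero_smul, nhds_prod_eq] at h
    exact h.mono_left (prod_mono_left _ nhdsWithin_le_nhds)
  have hpos : ∀ᶠ q : ℝ × E in 𝓝[>] 0 ×ˢ 𝓝 x, 0 < q.1 :=
    tendsto_fst.eventually self_mem_nhdsWithin
  have hrescale : ∀ᶠ q : ℝ × E in 𝓝[>] 0 ×ˢ 𝓝 x,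
      HasFDerivAt (fun y ↦ (q.1 ^ (n + 1))⁻¹ • f (q.1 • y))
        ((q.1 ^ n)⁻¹ • fderiv ℝ f (q.1 • q.2)) q.2 := by
    filter_upwards [hscale.eventually hdiff, hpos] with q hq hq0
    exact hasFDerivAt_rescale hq0.ne' hq
  have huniform : TendstoUniformlyOnFilter
      (fun s y ↦ ((s : ℝ) ^ n)⁻¹ • fderiv ℝ f (s • y)) L (𝓝[>] 0) (𝓝 x) := by
    have hbounded : (fun q : ℝ × E ↦ ‖q.1 • q.2‖ ^ n) =O[𝓝[>] 0 ×ˢ 𝓝 x] fun q ↦ q.1 ^ n := by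
      have hnorm : (fun q : ℝ × E ↦ ‖q.2‖) =O[𝓝[>] 0 ×ˢ 𝓝 x] fun _ ↦ (1 : ℝ) :=
        (continuous_norm.continuousAt.tendsto.comp tendsto_snd).isBigO_one ℝ
      simpa [norm_smul] using (((isBigO_refl _ _).norm_left.mul hnorm).pow n)
    have h := ((hfL.comp_tendsto hscale).trans_isBigO hbounded).tendsto_inv_smul_nhds_zero
    refine Metric.tendstoUniformlyOnFilter_iff.2 fun ε hε ↦ ?_
    filter_upwards [Metric.tendsto_nhds.1 h ε hε, hpos] with q hq hq0
    rwa [Function.comp_apply, hL, smul_sub, inv_smul_smul₀ (pow_pos hq0 n).ne', dist_zero_right,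
      ← dist_eq_norm, dist_comm] at hq
  have hpointwise : ∀ᶠ y in 𝓝 x,
      Tendsto (fun s : ℝ ↦ (s ^ (n + 1))⁻¹ • f (s • y)) (𝓝[>] 0) (𝓝 0) :=
    .of_forall (HasRadialTerm.of_isLittleO hf)
  exact (hasFDerivAt_of_tendstoUniformlyOnFilter huniform hrescale hpointwise).unique
    (hasFDerivAt_const 0 x)

end Taylor

-- The codomain lives in `max u v` because the induction replaces `F` by `E →L[ℝ] F`.
lemma iteratedFDeriv_eq_zero_of_isBigO {E : Type u} {F : Type (max u v)} [NormedAddCommGroup E]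
    [NormedSpace ℝ E] [NormedAddCommGroup F] [NormedSpace ℝ F] [CompleteSpace F] {f : E → F} {n : ℕ}
    (hf : ContDiffAt ℝ ∞ f 0) (hbig : f =O[𝓝 0] fun y ↦ ‖y‖ ^ n) :
    ∀ k < n, iteratedFDeriv ℝ k f 0 = 0 := by
  induction n generalizing F with
  | zero => simp
  | succ n ih =>
    have hlow := ih hf (hbig.trans (isBigO_norm_pow_norm_pow n.le_succ))
    cases n with
    | zero =>
      intro k hk
      obtain rfl : k = 0 := by omega
      have hf0 : f 0 = 0 := by simpa using hbig.eq_zero_imp.self_of_nhds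
      rw [← norm_eq_zero, norm_iteratedFDeriv_zero, hf0, norm_zero]
    | succ m =>
      have hiter : ∀ k, iteratedFDeriv ℝ (k + 1) f 0 = 0 ↔
          iteratedFDeriv ℝ k (fderiv ℝ f) 0 = 0 := fun k ↦ by
        rw [← norm_eq_zero, ← norm_iteratedFDeriv_fderiv, norm_eq_zero]
      have hf' : ContDiffAt ℝ ∞ (fderiv ℝ f) 0 := hf.fderiv_right (by simp)
      obtain ⟨L, -, hL, hfL⟩ := exists_homogeneous_sub_isBigO (n := m) (f := fderiv ℝ f)
        (hf'.of_le (mod_cast le_top)) fun k hk ↦ (hiter k).1 (hlow _ (by omega))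
      have hL0 : L = 0 := by
        refine eq_zero_of_fderiv_sub_isLittleO (n := m) ?_
          (hbig.trans_isLittleO (isLittleO_norm_pow_norm_pow (by omega))) hL
          (hfL.trans_isLittleO (isLittleO_norm_pow_norm_pow (by omega)))
        filter_upwards [(hf.of_le (m := 1) (mod_cast le_top)).eventually (by simp)] with y hy
        exact hy.differentiableAt (by simp)
      have hbig' : fderiv ℝ f =O[𝓝 0] fun y ↦ ‖y‖ ^ (m + 1) := by simpa [hL0] using hfL
      intro k hk
      cases k with
      | zero => exact hlow 0 (by omega)
      | succ k => exact (hiter k).2 (ih hf' hbig' k (by omega))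

lemma isBigO_norm_pow_succ_of_isLittleO {E : Type u} {F : Type (max u v)} [NormedAddCommGroup E]
    [NormedSpace ℝ E] [NormedAddCommGroup F] [NormedSpace ℝ F] [CompleteSpace F] {f : E → F} {n : ℕ}
    (hf : ContDiffAt ℝ ∞ f 0) (hsmall : f =o[𝓝 0] fun y ↦ ‖y‖ ^ n) :
    f =O[𝓝 0] fun y ↦ ‖y‖ ^ (n + 1) := by
  obtain ⟨R, -, hR, hfR⟩ := exists_homogeneous_sub_isBigO (n := n)
    (hf.of_le (mod_cast le_top)) (iteratedFDeriv_eq_zero_of_isBigO hf hsmall.isBigO)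
  have hRsmall : R =o[𝓝 0] fun y ↦ ‖y‖ ^ n := by
    simpa only [sub_sub_cancel] using
      hsmall.sub (hfR.trans_isLittleO (isLittleO_norm_pow_norm_pow n.lt_succ_self))
  have hR0 : R = 0 := (HasRadialTerm.of_homogeneous hR).unique (.of_isLittleO hRsmall)
  simpa [hR0] using hfR

lemma natCast_le_vanishOrder_iff {E : Type*} [NormedAddCommGroup E] [NormedSpace ℝ E]
    {f : ℂ → E} {n : ℕ} :
    (n : ℕ∞) ≤ vanishOrder f ↔ ∀ k < n, iteratedFDeriv ℝ k f 0 = 0 := by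
  refine le_sInf_iff.trans ⟨fun h k hk ↦ ?_, ?_⟩
  · by_contra hne
    exact hk.not_ge (mod_cast h k ⟨k, rfl, hne⟩)
  · rintro h _ ⟨k, rfl, hne⟩
    by_contra hlt
    exact hne (h k (by simpa using hlt))

lemma natCast_le_vanishOrder_iff_isBigO {E : Type*} [NormedAddCommGroup E] [NormedSpace ℝ E]
    [CompleteSpace E] {f : ℂ → E} (hf : ContDiffAt ℝ ∞ f 0) {n : ℕ} :
    (n : ℕ∞) ≤ vanishOrder f ↔ f =O[𝓝 0] fun t ↦ ‖t‖ ^ n :=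
  natCast_le_vanishOrder_iff.trans
    ⟨isBigO_of_iteratedFDeriv_eq_zero (hf.of_le (mod_cast le_top)),
      iteratedFDeriv_eq_zero_of_isBigO hf⟩

section Analytic

variable {E : Type*} [NormedAddCommGroup E] [NormedSpace ℂ E] {g : ℂ → E} {m : ℕ}

lemma HasRadialTerm.of_eventuallyEq_pow_smul {u : ℂ → E} (hu : ContinuousAt u 0)
    (hg : g =ᶠ[𝓝 0] fun t ↦ t ^ m • u t) : HasRadialTerm g m fun ζ ↦ ζ ^ m • u 0 := fun ζ ↦ by
  have hray := tendsto_smul_nhdsGT_zero ζ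
  refine ((hu.tendsto.comp hray).const_smul (ζ ^ m)).congr' ?_
  filter_upwards [hray.eventually hg, self_mem_nhdsWithin] with s hs hpos
  have hne : (s : ℂ) ^ m ≠ 0 := pow_ne_zero _ (mod_cast (ne_of_gt hpos))
  rw [hs, Function.comp_apply, real_smul, mul_pow, mul_smul, ← coe_smul, ofReal_inv, ofReal_pow,
    inv_smul_smul₀ hne]

lemma exists_eventuallyEq_pow_smul_of_isBigO [CompleteSpace E] (hg : AnalyticAt ℂ g 0)
    (hbig : g =O[𝓝 0] fun t ↦ ‖t‖ ^ m) :
    ∃ u : ℂ → E, AnalyticAt ℂ u 0 ∧ g =ᶠ[𝓝 0] fun t ↦ t ^ m • u t := by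
  induction m with
  | zero => exact ⟨g, hg, by simp⟩
  | succ m ih =>
    obtain ⟨u, hu, hgu⟩ := ih (hbig.trans (isBigO_norm_pow_norm_pow m.le_succ))
    have hu0 : u 0 = 0 := by
      have hsmall := hbig.trans_isLittleO (isLittleO_norm_pow_norm_pow m.lt_succ_self)
      simpa using congrFun ((HasRadialTerm.of_eventuallyEq_pow_smul hu.continuousAt hgu).unique
        (.of_isLittleO hsmall)) 1
    have horder : ((1 : ℕ) : ℕ∞) ≤ analyticOrderAt u 0 :=
      Order.one_le_iff_ne_zero.2 (hu.analyticOrderAt_ne_zero.2 hu0)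
    obtain ⟨v, hv, huv⟩ := (natCast_le_analyticOrderAt hu).1 horder
    refine ⟨v, hv, ?_⟩
    filter_upwards [hgu, huv] with t hgt hut
    rw [hgt, hut, sub_zero, pow_one, pow_succ, mul_smul]

lemma exists_hasRadialTerm_of_isBigO [CompleteSpace E] (hg : AnalyticAt ℂ g 0)
    (hbig : g =O[𝓝 0] fun t ↦ ‖t‖ ^ m) :
    ∃ c : E, HasRadialTerm g m (fun ζ ↦ ζ ^ m • c) ∧
      (c = 0 → g =O[𝓝 0] fun t ↦ ‖t‖ ^ (m + 1)) := by
  obtain ⟨u, hu, hgu⟩ := exists_eventuallyEq_pow_smul_of_isBigO hg hbig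
  refine ⟨u 0, .of_eventuallyEq_pow_smul hu.continuousAt hgu, fun hu0 ↦ ?_⟩
  have hpow : (fun t : ℂ ↦ t ^ m) =O[𝓝 0] fun t ↦ ‖t‖ ^ m := .of_bound 1 (by simp)
  have hlin : u =O[𝓝 0] fun t ↦ ‖t‖ := by
    simpa [hu0] using hu.differentiableAt.isBigO_sub.norm_right
  exact (hpow.smul hlin).congr' hgu.symm (.of_forall fun t ↦ (pow_succ _ _).symm)

end Analytic

lemma eq_zero_of_re_pow_mul_eq_zero {c : ℂ} {m : ℕ} (hm : m ≠ 0)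
    (h : ∀ ζ : ℂ, (ζ ^ m * c).re = 0) : c = 0 := by
  obtain ⟨ζ, hζ⟩ := IsAlgClosed.exists_pow_nat_eq (starRingEnd ℂ c) hm.bot_lt
  simpa [hζ, ← normSq_eq_conj_mul_self] using h ζ

lemma HasRadialTerm.re {g T : ℂ → ℂ} {m : ℕ} (hg : HasRadialTerm g m T) :
    HasRadialTerm (fun t ↦ (g t).re) m fun ζ ↦ (T ζ).re := by
  simpa using! hg.comp_homogeneous (N := 1) continuous_re (by simp)

-- If `g = c t ^ j + ⋯` with `0 < j < m`, then `Re g` is `o(t ^ j)`, so `Re (c ζ ^ j)` vanishes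
-- identically and `c = 0`.
lemma isBigO_of_sub_re_isLittleO {g : ℂ → ℂ} {r : ℂ → ℝ} {m : ℕ} (hg : AnalyticAt ℂ g 0)
    (hg0 : g 0 = 0) (hr : r =O[𝓝 0] fun t ↦ ‖t‖ ^ m)
    (hrg : (fun t ↦ r t - (g t).re) =o[𝓝 0] g) : g =O[𝓝 0] fun t ↦ ‖t‖ ^ m := by
  suffices h : ∀ j, j ≤ m → g =O[𝓝 0] fun t ↦ ‖t‖ ^ j from h m le_rfl
  intro j hj
  induction j with
  | zero => simpa using hg.continuousAt.isBigO_one ℝ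
  | succ j ih =>
    have hgj := ih (by omega)
    obtain ⟨c, hc, hcg⟩ := exists_hasRadialTerm_of_isBigO hg hgj
    refine hcg ?_
    rcases eq_or_ne j 0 with rfl | hj0
    · have hlim : HasRadialTerm g 0 0 := .of_isLittleO (by
        simpa [isLittleO_one_iff, hg0] using hg.continuousAt.tendsto)
      simpa using congrFun (hc.unique hlim) 0
    · have hre : (fun t ↦ (g t).re) =o[𝓝 0] fun t ↦ ‖t‖ ^ j := by
        have hrj := hr.trans_isLittleO (isLittleO_norm_pow_norm_pow hj)
        simpa only [sub_sub_cancel] using hrj.sub (hrg.trans_isBigO hgj)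
      exact eq_zero_of_re_pow_mul_eq_zero hj0 (congrFun (hc.re.unique (.of_isLittleO hre)))

lemma exists_eq_re_pow_mul {R : ℂ → ℝ} {b e : ℂ} {k N : ℕ} (hb : b ≠ 0) (hk : k ≠ 0)
    (h : ∀ ζ, R (ζ ^ k * b) = (ζ ^ (k * N) * e).re) : ∃ c : ℂ, ∀ x, R x = (c * x ^ N).re := by
  refine ⟨e / b ^ N, fun x ↦ ?_⟩
  obtain ⟨ζ, hζ⟩ := IsAlgClosed.exists_pow_nat_eq (x / b) hk.bot_lt
  have hx : ζ ^ k * b = x := by rw [hζ, div_mul_cancel₀ x hb]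
  rw [← hx, h ζ, pow_mul, mul_pow]
  congr 1
  field_simp

section InfiniteType

variable {ρ : ℂ × ℂ → ℝ}

lemma isLittleO_sub_sub_re (hρ : HasStrictFDerivAt ρ (reCLM ∘L .fst ℝ ℂ ℂ) 0) {u v w : ℂ → ℂ}
    (hu : Tendsto u (𝓝 0) (𝓝 0)) (hv : Tendsto v (𝓝 0) (𝓝 0)) (hw : Tendsto w (𝓝 0) (𝓝 0)) :
    (fun t ↦ ρ (u t, w t) - ρ (v t, w t) - (u t - v t).re) =o[𝓝 0] fun t ↦ u t - v t := by
  have hpair : Tendsto (fun t ↦ ((u t, w t), (v t, w t))) (𝓝 0) (𝓝 (0, 0)) :=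
    (hu.prodMk_nhds hw).prodMk_nhds (hv.prodMk_nhds hw)
  refine ((hρ.isLittleO.comp_tendsto hpair).congr_left fun t ↦ ?_).trans_isBigO ?_
  · simp
  · exact .of_bound 1 (.of_forall fun t ↦ by simp)

lemma isLittleO_comp_zero_graph (hρ : HasFDerivAt ρ (reCLM ∘L .fst ℝ ℂ ℂ) 0) (hρ0 : ρ 0 = 0) :
    (fun t ↦ ρ (0, t)) =o[𝓝 0] fun t ↦ t := by
  have hpair : Tendsto (fun t : ℂ ↦ ((0 : ℂ), t)) (𝓝 0) (𝓝 0) :=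
    tendsto_const_nhds.prodMk_nhds tendsto_id
  refine ((hρ.isLittleO.comp_tendsto hpair).congr_left fun t ↦ ?_).trans_isBigO ?_
  · simp [hρ0]
  · exact .of_bound 1 (.of_forall fun t ↦ by simp)

lemma isBigO_sub_of_isBigO_comp (hρ : HasStrictFDerivAt ρ (reCLM ∘L .fst ℝ ℂ ℂ) 0) {u v w : ℂ → ℂ}
    {m : ℕ} (hu : AnalyticAt ℂ u 0) (hv : AnalyticAt ℂ v 0) (hw : Tendsto w (𝓝 0) (𝓝 0))
    (hu0 : u 0 = 0) (hv0 : v 0 = 0) (hρu : (fun t ↦ ρ (u t, w t)) =O[𝓝 0] fun t ↦ ‖t‖ ^ m)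
    (hρv : (fun t ↦ ρ (v t, w t)) =O[𝓝 0] fun t ↦ ‖t‖ ^ m) :
    (fun t ↦ u t - v t) =O[𝓝 0] fun t ↦ ‖t‖ ^ m :=
  isBigO_of_sub_re_isLittleO (hu.sub hv) (by simp [hu0, hv0]) (hρu.sub hρv)
    (isLittleO_sub_sub_re hρ (by simpa [hu0] using hu.continuousAt.tendsto)
      (by simpa [hv0] using hv.continuousAt.tendsto) hw)

lemma exists_disc_of_isInfiniteType (hρ : ContDiffAt ℝ ∞ ρ 0) (htype : IsInfiniteType ρ) {N : ℕ}
    (hN : N ≠ 0) :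
    ∃ (h : ℂ → ℂ × ℂ) (k : ℕ), AnalyticAt ℂ h 0 ∧ h 0 = 0 ∧ k ≠ 0 ∧
      h =O[𝓝 0] (fun t ↦ ‖t‖ ^ k) ∧ ¬h =O[𝓝 0] (fun t ↦ ‖t‖ ^ (k + 1)) ∧
      (fun t ↦ ρ (h t)) =O[𝓝 0] fun t ↦ ‖t‖ ^ (k * N + 1) := by
  obtain ⟨h, hhol, hh0, hfinite, hcontact⟩ := htype N hN.bot_lt
  obtain ⟨k, hk⟩ := ENat.ne_top_iff_exists.1 hfinite
  have han : AnalyticAt ℂ h 0 := hhol.analyticAt (ball_mem_nhds 0 one_pos)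
  have hsm : ContDiffAt ℝ ∞ h 0 := (han.contDiffAt (n := ∞)).restrict_scalars ℝ
  have horder (n : ℕ) : n ≤ k ↔ h =O[𝓝 0] fun t ↦ ‖t‖ ^ n := by
    rw [← natCast_le_vanishOrder_iff_isBigO hsm, ← hk, Nat.cast_le]
  have hk0 : k ≠ 0 := by
    have hlin : h =O[𝓝 0] fun t ↦ ‖t‖ ^ 1 := by
      simpa [hh0] using han.differentiableAt.isBigO_sub.norm_right
    exact Nat.one_le_iff_ne_zero.1 ((horder 1).2 hlin)
  refine ⟨h, k, han, hh0, hk0, (horder k).1 le_rfl, (horder (k + 1)).not.1 (by simp), ?_⟩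
  rw [← hh0] at hρ
  have hρh : ContDiffAt ℝ ∞ (fun t ↦ ρ (h t)) 0 := hρ.comp 0 hsm
  rw [← natCast_le_vanishOrder_iff_isBigO hρh, mul_comm, Nat.cast_succ, Nat.cast_mul, hk]
  exact Order.add_one_le_of_lt hcontact

lemma exists_hasRadialTerm_snd (hρ : HasStrictFDerivAt ρ (reCLM ∘L .fst ℝ ℂ ℂ) 0) (hρ0 : ρ 0 = 0)
    {h : ℂ → ℂ × ℂ} {k : ℕ} (han : AnalyticAt ℂ h 0) (hh0 : h 0 = 0)
    (hbig : h =O[𝓝 0] fun t ↦ ‖t‖ ^ k) (hnot : ¬h =O[𝓝 0] fun t ↦ ‖t‖ ^ (k + 1))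
    (hρh : (fun t ↦ ρ (h t)) =O[𝓝 0] fun t ↦ ‖t‖ ^ (k + 1)) :
    ∃ b ≠ 0, HasRadialTerm (fun t ↦ (h t).2) k fun ζ ↦ ζ ^ k • b := by
  have hsnd : AnalyticAt ℂ (fun t ↦ (h t).2) 0 := analyticAt_snd.comp han
  have hsnd0 : Tendsto (fun t ↦ (h t).2) (𝓝 0) (𝓝 0) := by
    simpa [hh0] using hsnd.continuousAt.tendsto
  obtain ⟨b, hb, hb0⟩ := exists_hasRadialTerm_of_isBigO hsnd (isBigO_snd_prod.trans hbig)
  refine ⟨b, fun hzero ↦ hnot ?_, hb⟩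
  have hw := hb0 hzero
  have hρw := (isLittleO_comp_zero_graph hρ.hasFDerivAt hρ0).isBigO.comp_tendsto hsnd0
  have hu := isBigO_sub_of_isBigO_comp hρ (analyticAt_fst.comp han) analyticAt_const hsnd0
    (by simp [hh0]) rfl hρh (hρw.trans hw)
  exact (hu.congr_left fun t ↦ sub_zero _).prod_left hw

variable {p : ℂ → ℂ} {N : ℕ}

lemma exists_homogeneous_comp_eq_re (hρ : HasStrictFDerivAt ρ (reCLM ∘L .fst ℝ ℂ ℂ) 0)
    (hp : AnalyticAt ℂ p 0) (hp0 : p 0 = 0)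
    (hρp : (fun t ↦ ρ (p t, t)) =O[𝓝 0] fun t ↦ ‖t‖ ^ N)
    {R : ℂ → ℝ} (hRcont : Continuous R) (hRhom : ∀ (s : ℝ) x, R (s • x) = s ^ N • R x)
    (hR : (fun t ↦ ρ (p t, t) - R t) =O[𝓝 0] fun t ↦ ‖t‖ ^ (N + 1))
    {u w T : ℂ → ℂ} {k : ℕ} (hk : k ≠ 0) (hu : AnalyticAt ℂ u 0) (hw : AnalyticAt ℂ w 0)
    (hu0 : u 0 = 0) (hw0 : w 0 = 0) (hwbig : w =O[𝓝 0] fun t ↦ ‖t‖ ^ k) (hT : HasRadialTerm w k T)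
    (hρuw : (fun t ↦ ρ (u t, w t)) =O[𝓝 0] fun t ↦ ‖t‖ ^ (k * N + 1)) :
    ∃ e : ℂ, ∀ ζ, R (T ζ) = (ζ ^ (k * N) * e).re := by
  have hpw : AnalyticAt ℂ (fun t ↦ p (w t)) 0 := .comp (by rwa [hw0]) hw
  have hpw0 : p (w 0) = 0 := by rw [hw0, hp0]
  have hwlim : Tendsto w (𝓝 0) (𝓝 0) := by simpa [hw0] using hw.continuousAt.tendsto
  have hwpow (n : ℕ) : (fun t ↦ ‖w t‖ ^ n) =O[𝓝 0] fun t ↦ ‖t‖ ^ (k * n) := by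
    simpa only [pow_mul] using hwbig.norm_left.pow n
  have hg := isBigO_sub_of_isBigO_comp hρ hu hpw hwlim hu0 hpw0
    (hρuw.trans (isBigO_norm_pow_norm_pow (Nat.le_succ _)))
    ((hρp.comp_tendsto hwlim).trans (hwpow N))
  obtain ⟨e, he, -⟩ := exists_hasRadialTerm_of_isBigO (hu.sub hpw) hg
  have hcancel : (fun t ↦ R (w t) + (u t - p (w t)).re) =o[𝓝 0] fun t ↦ ‖t‖ ^ (k * N) := by
    have hlinear := (isLittleO_sub_sub_re hρ (by simpa [hu0] using hu.continuousAt.tendsto)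
      (by simpa [hpw0] using hpw.continuousAt.tendsto) hwlim).trans_isBigO hg
    have hcontact := hρuw.trans_isLittleO (isLittleO_norm_pow_norm_pow (k * N).lt_succ_self)
    have hremainder := ((hR.comp_tendsto hwlim).trans (hwpow (N + 1))).trans_isLittleO
      (isLittleO_norm_pow_norm_pow (Nat.mul_lt_mul_of_pos_left N.lt_succ_self hk.bot_lt))
    refine ((hcontact.sub hlinear).sub hremainder).congr_left fun t ↦ ?_
    simp only [Function.comp_apply]
    ring
  refine ⟨-e, fun ζ ↦ ?_⟩
  rw [mul_neg, neg_re]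
  exact eq_neg_of_add_eq_zero_left (congrFun
    (((hT.comp_homogeneous hRcont hRhom).add he.re).unique (.of_isLittleO hcancel)) ζ)

lemma homogeneous_eq_re_mul_pow (hρ : ContDiffAt ℝ ∞ ρ 0)
    (hdρ : HasStrictFDerivAt ρ (reCLM ∘L .fst ℝ ℂ ℂ) 0) (hρ0 : ρ 0 = 0)
    (htype : IsInfiniteType ρ) (hN : N ≠ 0) (hp : AnalyticAt ℂ p 0) (hp0 : p 0 = 0)
    (hρp : (fun t ↦ ρ (p t, t)) =O[𝓝 0] fun t ↦ ‖t‖ ^ N)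
    {R : ℂ → ℝ} (hRcont : Continuous R) (hRhom : ∀ (s : ℝ) x, R (s • x) = s ^ N • R x)
    (hR : (fun t ↦ ρ (p t, t) - R t) =O[𝓝 0] fun t ↦ ‖t‖ ^ (N + 1)) :
    ∃ c : ℂ, ∀ x, R x = (c * x ^ N).re := by
  obtain ⟨h, k, han, hh0, hk, hbig, hnot, hρh⟩ := exists_disc_of_isInfiniteType hρ htype hN
  have hle : k ≤ k * N := Nat.le_mul_of_pos_right k hN.bot_lt
  obtain ⟨b, hb, hwterm⟩ := exists_hasRadialTerm_snd hdρ hρ0 han hh0 hbig hnot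
    (hρh.trans (isBigO_norm_pow_norm_pow (Nat.succ_le_succ hle)))
  obtain ⟨e, he⟩ := exists_homogeneous_comp_eq_re hdρ hp hp0 hρp hRcont hRhom hR hk
    (analyticAt_fst.comp han) (analyticAt_snd.comp han) (by simp [hh0]) (by simp [hh0])
    (isBigO_snd_prod.trans hbig) hwterm hρh
  exact exists_eq_re_pow_mul hb hk he

lemma contDiffAt_comp_graph (hρ : ContDiffAt ℝ ∞ ρ 0) (hp : AnalyticAt ℂ p 0) (hp0 : p 0 = 0) :
    ContDiffAt ℝ ∞ (fun t ↦ ρ (p t, t)) 0 := by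
  have hgraph : ContDiffAt ℝ ∞ (fun t ↦ (p t, t)) 0 :=
    ((hp.contDiffAt (n := ∞)).restrict_scalars ℝ).prodMk contDiffAt_id
  exact ContDiffAt.comp 0 (by rwa [hp0]) hgraph

lemma exists_sub_mul_pow_isBigO (hρ : ContDiffAt ℝ ∞ ρ 0)
    (hdρ : HasStrictFDerivAt ρ (reCLM ∘L .fst ℝ ℂ ℂ) 0) (hρ0 : ρ 0 = 0)
    (htype : IsInfiniteType ρ) (hN : N ≠ 0) (hp : AnalyticAt ℂ p 0) (hp0 : p 0 = 0)
    (hρp : (fun t ↦ ρ (p t, t)) =O[𝓝 0] fun t ↦ ‖t‖ ^ N) :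
    ∃ c : ℂ, (fun t ↦ ρ (p t - c * t ^ N, t)) =O[𝓝 0] fun t ↦ ‖t‖ ^ (N + 1) := by
  have hF := contDiffAt_comp_graph hρ hp hp0
  obtain ⟨R, hRcont, hRhom, hR⟩ := exists_homogeneous_sub_isBigO (n := N)
    (hF.of_le (mod_cast le_top)) (iteratedFDeriv_eq_zero_of_isBigO hF hρp)
  obtain ⟨c, hc⟩ :=
    homogeneous_eq_re_mul_pow hρ hdρ hρ0 htype hN hp hp0 hρp hRcont hRhom hR
  have hq : AnalyticAt ℂ (fun t ↦ p t - c * t ^ N) 0 := by fun_prop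
  have hq0 : p 0 - c * 0 ^ N = 0 := by simp [hp0, hN]
  refine ⟨c, isBigO_norm_pow_succ_of_isLittleO (contDiffAt_comp_graph hρ hq hq0) ?_⟩
  have hpow : (fun t : ℂ ↦ p t - c * t ^ N - p t) =O[𝓝 0] fun t ↦ ‖t‖ ^ N :=
    .of_bound ‖c‖ (.of_forall fun t ↦ by simp)
  have hsmall := (isLittleO_sub_sub_re hdρ (by simpa [hq0] using hq.continuousAt.tendsto)
    (by simpa [hp0] using hp.continuousAt.tendsto) tendsto_id).trans_isBigO hpow
  refine (hsmall.add (hR.trans_isLittleO (isLittleO_norm_pow_norm_pow N.lt_succ_self))).congr_left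
    fun t ↦ ?_
  simp only [id_eq, hc, sub_sub_cancel_left, neg_re]
  ring

lemma isBigO_comp_zero_graph (hρ : ContDiffAt ℝ ∞ ρ 0)
    (hdρ : HasFDerivAt ρ (reCLM ∘L .fst ℝ ℂ ℂ) 0) (hρ0 : ρ 0 = 0) :
    (fun t ↦ ρ (0, t)) =O[𝓝 0] fun t ↦ ‖t‖ ^ 2 :=
  isBigO_norm_pow_succ_of_isLittleO (contDiffAt_comp_graph hρ analyticAt_const rfl)
    (by simpa using (isLittleO_comp_zero_graph hdρ hρ0).norm_right)

end InfiniteType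

lemma exists_coeff_of_exists_sub_mul_pow {K : Type*} [Ring K] {Good : ℕ → (K → K) → Prop} {n₀ : ℕ}
    (hzero : Good n₀ 0)
    (hstep : ∀ N ≥ n₀, ∀ p, Good N p → ∃ c, Good (N + 1) fun t ↦ p t - c * t ^ N) :
    ∃ a : ℕ → K, ∀ N ≥ n₀, Good N fun t ↦ -∑ j ∈ Finset.Ico n₀ N, a j * t ^ j := by
  choose! next hnext using hstep
  let p : ℕ → K → K := Nat.rec 0 fun n q t ↦ q t - next (n₀ + n) q * t ^ (n₀ + n)
  have hgood : ∀ n, Good (n₀ + n) (p n) := fun n ↦ by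
    induction n with
    | zero => exact hzero
    | succ n ih => exact hnext _ (Nat.le_add_right n₀ n) _ ih
  have hsum : ∀ n, p n = fun t ↦
      -∑ j ∈ Finset.Ico n₀ (n₀ + n), next j (p (j - n₀)) * t ^ j := fun n ↦ by
    funext t
    induction n with
    | zero => simp [p]
    | succ n ih =>
      rw [← add_assoc, Finset.sum_Ico_succ_top (Nat.le_add_right n₀ n), neg_add', ← ih,
        Nat.add_sub_cancel_left]
  refine ⟨fun j ↦ next j (p (j - n₀)), fun N hN ↦ ?_⟩
  obtain ⟨n, rfl⟩ := Nat.exists_eq_add_of_le hN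
  rw [← hsum]
  exact hgood n

lemma contDiff_re_add_add_im_mul {P : ℂ → ℝ} {Q : ℂ × ℝ → ℝ} {n : ℕ∞} (hP : ContDiff ℝ n P)
    (hQ : ContDiff ℝ n Q) :
    ContDiff ℝ n fun z : ℂ × ℂ ↦ z.1.re + P z.2 + z.1.im * Q (z.2, z.1.im) := by
  have hre : ContDiff ℝ n fun z : ℂ × ℂ ↦ z.1.re := reCLM.contDiff.comp contDiff_fst
  have him : ContDiff ℝ n fun z : ℂ × ℂ ↦ z.1.im := imCLM.contDiff.comp contDiff_fst
  fun_prop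

lemma hasFDerivAt_re_add_add_im_mul {P : ℂ → ℝ} {Q : ℂ × ℝ → ℝ}
    (hP : HasFDerivAt P (0 : ℂ →L[ℝ] ℝ) 0) (hQ : DifferentiableAt ℝ Q (0, 0))
    (hQ0 : Q (0, 0) = 0) :
    HasFDerivAt (fun z : ℂ × ℂ ↦ z.1.re + P z.2 + z.1.im * Q (z.2, z.1.im))
      (reCLM ∘L .fst ℝ ℂ ℂ) 0 := by
  have hre : HasFDerivAt (fun z : ℂ × ℂ ↦ z.1.re) (reCLM ∘L .fst ℝ ℂ ℂ) 0 :=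
    (reCLM ∘L .fst ℝ ℂ ℂ).hasFDerivAt
  have him : HasFDerivAt (fun z : ℂ × ℂ ↦ z.1.im) (imCLM ∘L .fst ℝ ℂ ℂ) 0 :=
    (imCLM ∘L .fst ℝ ℂ ℂ).hasFDerivAt
  have hP' : HasFDerivAt (fun z : ℂ × ℂ ↦ P z.2) ((0 : ℂ →L[ℝ] ℝ) ∘L .snd ℝ ℂ ℂ) 0 :=
    HasFDerivAt.comp (0 : ℂ × ℂ) hP hasFDerivAt_snd
  have hQ' := HasFDerivAt.comp (0 : ℂ × ℂ) (f := fun z : ℂ × ℂ ↦ (z.2, z.1.im)) hQ.hasFDerivAt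
    (hasFDerivAt_snd.prodMk him)
  refine ((hre.add hP').add (him.mul hQ')).congr_fderiv ?_
  simp [hQ0]

theorem statement3_general {ρ : ℂ × ℂ → ℝ} (hρ : ContDiffAt ℝ ∞ ρ 0) (hρ0 : ρ 0 = 0)
    (hdρ : HasFDerivAt ρ (reCLM ∘L .fst ℝ ℂ ℂ) 0) (htype : IsInfiniteType ρ) :
    ∃ a : ℕ → ℂ, ∀ N : ℕ, 2 ≤ N →
      (N : ℕ∞) < vanishOrder fun t ↦ ρ (-(∑ j ∈ Finset.Icc 2 N, a j * t ^ j), t) := by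
  have hstrict := hρ.hasStrictFDerivAt' hdρ (by simp)
  obtain ⟨a, ha⟩ := exists_coeff_of_exists_sub_mul_pow (n₀ := 2)
    (Good := fun N p ↦ AnalyticAt ℂ p 0 ∧ p 0 = 0 ∧
      (fun t ↦ ρ (p t, t)) =O[𝓝 0] fun t ↦ ‖t‖ ^ N)
    ⟨analyticAt_const, rfl, isBigO_comp_zero_graph hρ hdρ hρ0⟩ fun N hN p ⟨hp, hp0, hρp⟩ ↦ by
      have hN0 : N ≠ 0 := by omega
      obtain ⟨c, hc⟩ := exists_sub_mul_pow_isBigO hρ hstrict hρ0 htype hN0 hp hp0 hρp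
      exact ⟨c, by fun_prop, by simp [hp0, hN0], hc⟩
  refine ⟨a, fun N hN ↦ ?_⟩
  obtain ⟨hp, hp0, hρp⟩ := ha (N + 1) (by omega)
  rw [← Finset.Ico_add_one_right_eq_Icc]
  exact (Nat.cast_lt.2 N.lt_succ_self).trans_le
    ((natCast_le_vanishOrder_iff_isBigO (contDiffAt_comp_graph hρ hp hp0)).2 hρp)

/-- **Proposition (Kim–Ninh).** Let M be a C^∞ hypersurface germ at 0 in ℂ² with defining
function ρ(z₁,z₂) = Re z₁ + P(z₂) + (Im z₁) Q(z₂, Im z₁), with P(0)=0, dP(0)=0, Q(0,0)=0.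
If τ(M,0) = +∞, then there is a sequence {aₙ} ⊆ ℂ such that for each N ≥ 2 the holomorphic
curve φ_N(t) = (−Σ_{j=2}^N a_j t^j, t) satisfies ν(ρ ∘ φ_N) ≥ N. -/
theorem statement3 (P : ℂ → ℝ) (Q : ℂ × ℝ → ℝ)
    (hPsm : ContDiff ℝ (⊤ : ℕ∞) P) (hQsm : ContDiff ℝ (⊤ : ℕ∞) Q)
    (hP0 : P 0 = 0) (hdP0 : fderiv ℝ P 0 = 0) (hQ0 : Q (0, 0) = 0)
    (htype : IsInfiniteType (fun z : ℂ × ℂ => z.1.re + P z.2 + z.1.im * Q (z.2, z.1.im))) :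
    ∃ a : ℕ → ℂ, ∀ N : ℕ, 2 ≤ N →
      (N : ℕ∞) ≤ vanishOrder (fun t : ℂ =>
        (fun z : ℂ × ℂ => z.1.re + P z.2 + z.1.im * Q (z.2, z.1.im))
          (-(∑ j ∈ Finset.Icc 2 N, a j * t ^ j), t)) := by
  have hP : HasFDerivAt P (0 : ℂ →L[ℝ] ℝ) 0 := hdP0 ▸ (hPsm.differentiable (by simp) 0).hasFDerivAt
  obtain ⟨a, ha⟩ := statement3_general (contDiff_re_add_add_im_mul hPsm hQsm).contDiffAt
    (by simp [hP0])
    (hasFDerivAt_re_add_add_im_mul hP (hQsm.differentiable (by simp) 0) hQ0) htype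
  exact ⟨a, fun N hN ↦ (ha N hN).le⟩
end

section
/- Let P be a C^∞-smooth real-valued function on a disc around 0 in ℂ with P(0)=0, P(z) > 0 for all z ≠ 0, and P vanishing to infinite order at 0. Then for every real number β and every nonnegative integer n, the function z ↦ Re[1 + iβ z P'(z)/P(z)^{n+1}] does not tend to 0 as z → 0 (z ≠ 0). -/
/-!
Since `2 Re (v P'(z)) = dP_z(v)` for real-valued `P`, the quantity `2 Re (i z P'(z))` is the
derivative of `P` in the angular direction `i z`. It vanishes wherever `P` attains its maximum on a
circle `|z| = r`, so `Re (1 + i c(z) z P'(z)) = 1` at points arbitrarily close to `0`, whatever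
the real factor `c(z)` is, in particular for `c(z) = β / P(z)^(n+1)`.
-/

open Complex Metric Filter Topology Asymptotics

theorem re_mul_wirtingerR {P : ℂ → ℝ} {z : ℂ} (hP : DifferentiableAt ℝ P z) (v : ℂ) :
    (v * wirtingerR P z).re = fderiv ℝ P z v / 2 := by
  have fderiv_ofReal_comp (w : ℂ) : fderiv ℝ (fun u => (P u : ℂ)) z w = (fderiv ℝ P z w : ℂ) :=
    congrArg (· w) (Complex.ofRealCLM.hasFDerivAt.comp z hP.hasFDerivAt).fderiv
  have coordinates : v = v.re • (1 : ℂ) + v.im • I := by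
    simp only [Complex.real_smul, mul_one, Complex.re_add_im]
  have fderiv_eq : fderiv ℝ P z v = v.re * fderiv ℝ P z 1 + v.im * fderiv ℝ P z I := by
    conv_lhs => rw [coordinates]
    simp only [map_add, map_smul, smul_eq_mul]
  have wirtingerR_eq : wirtingerR P z = ⟨fderiv ℝ P z 1 / 2, -(fderiv ℝ P z I / 2)⟩ := by
    rw [wirtingerR, wirtinger, fderiv_ofReal_comp, fderiv_ofReal_comp, Complex.mk_eq_add_mul_I]
    push_cast
    ring
  rw [fderiv_eq, wirtingerR_eq, Complex.mul_re]
  ring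

section Rotation

variable {E : Type*} [NormedAddCommGroup E] [NormedSpace ℂ E] {f : E → ℝ}

theorem hasDerivAt_exp_ofReal_mul_I_smul (z : E) :
    HasDerivAt (fun t : ℝ => Complex.exp (t * I) • z) (I • z) 0 := by
  simpa using ((Complex.ofRealCLM.hasDerivAt (x := 0)).mul_const I).cexp.smul_const z

theorem fderiv_I_smul_eq_zero_of_isLocalExtrOn_sphere {z : E} (hf : DifferentiableAt ℝ f z)
    (hz : IsLocalExtrOn f (sphere 0 ‖z‖) z) : fderiv ℝ f z (I • z) = 0 := by
  let rotation (t : ℝ) : E := Complex.exp (t * I) • z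
  have rotation_zero : rotation 0 = z := by simp [rotation]
  have hasDerivAt_rotation : HasDerivAt rotation (I • z) 0 := hasDerivAt_exp_ofReal_mul_I_smul z
  have rotation_mem_sphere (t : ℝ) : rotation t ∈ sphere 0 ‖z‖ := by
    simp [rotation, norm_smul, Complex.norm_exp_ofReal_mul_I]
  have tendsto_rotation : Tendsto rotation (𝓝 0) (𝓝[sphere 0 ‖z‖] z) :=
    tendsto_nhdsWithin_iff.2 ⟨by simpa only [rotation_zero] using
      hasDerivAt_rotation.continuousAt.tendsto, .of_forall rotation_mem_sphere⟩
  have isLocalExtr_comp : IsLocalExtr (f ∘ rotation) 0 := by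
    rw [← rotation_zero] at hz tendsto_rotation
    exact hz.comp_tendsto tendsto_rotation
  exact isLocalExtr_comp.hasDerivAt_eq_zero
    (hf.hasFDerivAt.comp_hasDerivAt_of_eq 0 hasDerivAt_rotation rotation_zero.symm)

variable [Nontrivial E] [ProperSpace E]

theorem exists_mem_sphere_fderiv_I_smul_eq_zero {r : ℝ} (hr : 0 ≤ r)
    (hf : ∀ z ∈ sphere (0 : E) r, DifferentiableAt ℝ f z) :
    ∃ z ∈ sphere (0 : E) r, fderiv ℝ f z (I • z) = 0 := by
  obtain ⟨z, hz, hmax⟩ := (isCompact_sphere (0 : E) r).exists_isMaxOn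
    (NormedSpace.sphere_nonempty.2 hr) fun w hw => (hf w hw).continuousAt.continuousWithinAt
  rw [← mem_sphere_zero_iff_norm.1 hz] at hmax
  exact ⟨z, hz, fderiv_I_smul_eq_zero_of_isLocalExtrOn_sphere (hf z hz) hmax.localize.isExtr⟩

theorem frequently_fderiv_I_smul_eq_zero (hf : ∀ᶠ z in 𝓝[≠] 0, DifferentiableAt ℝ f z) :
    ∃ᶠ z in 𝓝[≠] 0, fderiv ℝ f z (I • z) = 0 := by
  intro hne
  obtain ⟨δ, hδ, hball⟩ := Metric.mem_nhdsWithin_iff.1 (hf.and hne)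
  obtain ⟨r, hr, hrδ⟩ := exists_between hδ
  have sphere_subset : sphere (0 : E) r ⊆ ball 0 δ ∩ {0}ᶜ := fun _ hz =>
    ⟨sphere_subset_ball hrδ hz, ne_of_mem_sphere hz hr.ne'⟩
  obtain ⟨z, hz, hzero⟩ := exists_mem_sphere_fderiv_I_smul_eq_zero hr.le
    fun w hw => (hball (sphere_subset hw)).1
  exact (hball (sphere_subset hz)).2 hzero

end Rotation

theorem statement5_general {P : ℂ → ℝ} (hP : ∀ᶠ z in 𝓝[≠] 0, DifferentiableAt ℝ P z)
    (c : ℂ → ℝ) :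
    ∃ᶠ z in 𝓝[≠] 0, ((1 : ℂ) + I * c z * z * wirtingerR P z).re = 1 := by
  refine ((frequently_fderiv_I_smul_eq_zero hP).and_eventually hP).mono fun z ⟨hzero, hPz⟩ => ?_
  have re_eq_zero : (I * z * wirtingerR P z).re = 0 := by
    rw [re_mul_wirtingerR hPz, ← smul_eq_mul, hzero, zero_div]
  have pull_out_factor : I * c z * z * wirtingerR P z = c z * (I * z * wirtingerR P z) := by ring
  rw [pull_out_factor, Complex.add_re, Complex.re_ofReal_mul, re_eq_zero, mul_zero, add_zero,
    Complex.one_re]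

/-- **Lemma 1 (Kim–Ninh).** Let P be a C^∞ real-valued function on a disc around 0 with
P(0)=0, P > 0 off 0, vanishing to infinite order at 0. For any real β and any nonnegative
integer n, the function Re[1 + iβ z P'(z)/P(z)^{n+1}] does not tend to 0 as z → 0, z ≠ 0. -/
theorem statement5 (ε₀ : ℝ) (hε₀ : 0 < ε₀) (P : ℂ → ℝ)
    (hPsm : ContDiffOn ℝ (⊤ : ℕ∞) P (Metric.ball 0 ε₀))
    (hP0 : P 0 = 0)
    (hPpos : ∀ z ∈ Metric.ball (0 : ℂ) ε₀, z ≠ 0 → 0 < P z)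
    (hPflat : ∀ n : ℕ, iteratedFDeriv ℝ n P 0 = 0)
    (β : ℝ) (n : ℕ) :
    ¬ Filter.Tendsto
        (fun z : ℂ =>
          ((1 : ℂ) + Complex.I * (β : ℂ) * z * wirtingerR P z / (P z : ℂ) ^ (n + 1)).re)
        (𝓝[≠] (0 : ℂ)) (𝓝 0) := by
  have hP : ∀ᶠ z in 𝓝[≠] 0, DifferentiableAt ℝ P z := eventually_nhdsWithin_of_eventually_nhds <|
    (hPsm.differentiableOn (by simp)).eventually_differentiableAt (ball_mem_nhds 0 hε₀)
  refine fun h => statement5_general hP (fun z => β / P z ^ (n + 1)) <|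
    (h.eventually_ne zero_ne_one).mono fun z hz => ?_
  simpa only [ofReal_div, ofReal_pow, mul_div_assoc', div_mul_eq_mul_div] using hz
end

section
/- Let P be a C^∞-smooth real-valued function on a disc around 0 in ℂ with P(0)=0, P(z) > 0 for all z ≠ 0, and P vanishing to infinite order at 0. Let a, b be complex numbers, let ℓ, m, n be nonnegative integers, and let g₁, g₂ be smooth functions on the punctured disc Δ*_{ε₀} = {0 < |z| < ε₀} (ε₀ sufficiently small) satisfying: (A1) g₁(z) = O(|z|^ℓ) and g₂(z) = o(|z|^m) as z → 0; (A2) Re[a z^m + (1/P(z)^n)·(b z^ℓ P'(z)/P(z) + g₁(z))] = g₂(z) for every z ∈ Δ*_{ε₀}. If neither of the exceptional cases (E1) ℓ = 1 and Re b = 0, nor (E2) m = 0 and Re a = 0, holds, then ab = 0. -/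
/-!
Suppose `b ≠ 0`. Since `d/dt P (γ t) = 2 Re (P' (γ t) γ' t)`, equation (A2) prescribes the
logarithmic derivative of `P` along integral curves of the vector field `b z ^ l`. Some of these
reach the origin and can be parametrised by `r = ‖z‖`: rays when `l ≠ 1`, logarithmic spirals when
`l = 1` and `Re b ≠ 0`. On such a curve the equation reads, for some real constant `c ≠ 0`,

  `(log P)' = (2 / c) r ^ (-l) (P ^ n (g₂ - Re (a z ^ m)) - Re g₁)`,

and an upper bound `C / r` on the right side would force `P ≥ const * r ^ C`, contradicting
flatness. The term in `g₁` always obeys such a bound. If `n ≥ 1` so does the other one, by flatness,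
and also if `l ≤ m + 1`; hence `n = 0` and `m < k := l - 1`. Then there are `2k` invariant rays,
along `ω ζ ^ j` with `b ω ^ k > 0` and `ζ = exp (i π / k)`, on which `c` has the sign `(-1) ^ j`.
Avoiding the upper bound on each of them requires `(-1) ^ j Re (a (ω ζ ^ j) ^ m) ≤ 0`. These numbers
add up to zero, so they all vanish, which yields `Re a = 0` if `m = 0`, and `a = 0` if `m > 0`
because `ζ ^ m` is not real.
-/

open Complex Metric Filter Topology Asymptotics

section Flat

variable {E F : Type*} [NormedAddCommGroup E] [NormedSpace ℝ E]
  [NormedAddCommGroup F] [NormedSpace ℝ F] {f : E → F} {x : E}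

theorem iteratedFDeriv_isBigO_norm_sub_pow {k n : ℕ} (hf : ContDiffAt ℝ (n + k : ℕ) f x)
    (h0 : ∀ i, n ≤ i → i < n + k → iteratedFDeriv ℝ i f x = 0) :
    iteratedFDeriv ℝ n f =O[𝓝 x] fun z ↦ ‖z - x‖ ^ k := by
  induction k generalizing n with
  | zero => simpa using (hf.continuousAt_iteratedFDeriv le_rfl).isBigO_one ℝ
  | succ k ih =>
    have hdiff : ∀ᶠ z in 𝓝 x, DifferentiableAt ℝ (iteratedFDeriv ℝ n f) z :=
      (hf.eventually (by exact_mod_cast ENat.natCast_ne_top (n + (k + 1)))).mono fun z hz ↦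
        hz.differentiableAt_iteratedFDeriv (by exact_mod_cast (by omega : n < n + (k + 1)))
    have hsucc : iteratedFDeriv ℝ (n + 1) f =O[𝓝 x] fun z ↦ ‖z - x‖ ^ k :=
      ih (by rwa [add_right_comm, add_assoc]) fun i hi hi' ↦ h0 i (by omega) (by omega)
    have hfderiv : fderiv ℝ (iteratedFDeriv ℝ n f) =O[𝓝 x] fun z ↦ ‖z - x‖ ^ (k : ℝ) := by
      simpa only [Real.rpow_natCast] using
        (isBigO_of_le _ fun z ↦ norm_fderiv_iteratedFDeriv.le).trans hsucc
    simpa only [← Nat.cast_succ, Real.rpow_natCast] using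
      isBigO_norm_rpow_add_one_of_fderiv_of_apply_eq_zero k.cast_nonneg hdiff hfderiv
        (h0 n le_rfl (by omega))

theorem isBigO_norm_sub_pow_of_iteratedFDeriv_eq_zero {k : ℕ} (hf : ContDiffAt ℝ k f x)
    (h0 : ∀ i < k, iteratedFDeriv ℝ i f x = 0) : f =O[𝓝 x] fun z ↦ ‖z - x‖ ^ k := by
  refine IsBigO.of_norm_left ?_
  simpa only [norm_iteratedFDeriv_zero] using
    (iteratedFDeriv_isBigO_norm_sub_pow (n := 0) (by rwa [zero_add])
      fun i _ hi ↦ h0 i (by omega)).norm_left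

end Flat

/-- Along the filter `l`, the function `f` is differentiable, positive, and smaller than every power
of the distance to the origin. In use, `l` consists of punctured or one-sided neighbourhoods of `0`,
and flatness is stated as decay so that nothing is required of `f` at `0` itself. -/
structure IsPositiveFlat {E : Type*} [NormedAddCommGroup E] [NormedSpace ℝ E] (f : E → ℝ)
    (l : Filter E) : Prop where
  differentiableAt : ∀ᶠ z in l, DifferentiableAt ℝ f z
  pos : ∀ᶠ z in l, 0 < f z
  isBigO_norm_pow : ∀ N : ℕ, f =O[l] fun z ↦ ‖z‖ ^ N

theorem IsPositiveFlat.of_contDiffAt {E : Type*} [NormedAddCommGroup E] [NormedSpace ℝ E]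
    {f : E → ℝ} (hf : ContDiffAt ℝ (⊤ : ℕ∞) f 0) (hpos : ∀ᶠ z in 𝓝[≠] 0, 0 < f z)
    (hflat : ∀ n : ℕ, iteratedFDeriv ℝ n f 0 = 0) : IsPositiveFlat f (𝓝[≠] 0) where
  differentiableAt := by
    have hf1 : ContDiffAt ℝ 1 f 0 := hf.of_le (by simp)
    exact ((hf1.eventually (by simp)).filter_mono nhdsWithin_le_nhds).mono
      fun z hz ↦ hz.differentiableAt one_ne_zero
  pos := hpos
  isBigO_norm_pow N := by
    have hfN : ContDiffAt ℝ N f 0 := hf.of_le (by exact_mod_cast le_top)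
    simpa only [sub_zero] using
      (isBigO_norm_sub_pow_of_iteratedFDeriv_eq_zero hfN fun i _ ↦ hflat i).mono nhdsWithin_le_nhds

theorem rpow_isBigO_of_mul_logDeriv_le {p : ℝ → ℝ} {C : ℝ}
    (hd : ∀ᶠ r in 𝓝[>] 0, DifferentiableAt ℝ p r) (hpos : ∀ᶠ r in 𝓝[>] 0, 0 < p r)
    (hle : ∀ᶠ r in 𝓝[>] 0, r * logDeriv p r ≤ C) :
    (fun r ↦ r ^ C) =O[𝓝[>] 0] p := by
  obtain ⟨δ, hδ : 0 < δ, hsub⟩ := mem_nhdsGT_iff_exists_Ioo_subset.1 (hd.and (hpos.and hle))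
  have hderiv : ∀ r ∈ Set.Ioo 0 δ, HasDerivAt (fun r ↦ Real.log (p r) - C * Real.log r)
      (logDeriv p r - C * r⁻¹) r := fun r hr ↦
    ((hsub hr).1.hasDerivAt.log (hsub hr).2.1.ne').sub
      ((Real.hasDerivAt_log hr.1.ne').const_mul C)
  have hanti : AntitoneOn (fun r ↦ Real.log (p r) - C * Real.log r) (Set.Ioo 0 δ) := by
    refine antitoneOn_of_deriv_nonpos (convex_Ioo 0 δ)
      (fun r hr ↦ (hderiv r hr).continuousAt.continuousWithinAt) ?_ ?_ <;>
      rw [interior_Ioo] <;> intro r hr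
    · exact (hderiv r hr).differentiableAt.differentiableWithinAt
    · rw [(hderiv r hr).deriv, sub_nonpos, ← div_eq_mul_inv, le_div_iff₀ hr.1, mul_comm]
      exact (hsub hr).2.2
  have hmid : δ / 2 ∈ Set.Ioo 0 δ := ⟨half_pos hδ, half_lt_self hδ⟩
  set K := Real.log (p (δ / 2)) - C * Real.log (δ / 2)
  refine IsBigO.of_bound (Real.exp (-K)) ?_
  filter_upwards [Ioo_mem_nhdsGT hmid.1] with r hr
  have hr' : r ∈ Set.Ioo 0 δ := ⟨hr.1, hr.2.trans hmid.2⟩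
  have hK : K ≤ Real.log (p r) - C * Real.log r := hanti hr' hmid hr.2.le
  have hp : 0 < p r := (hsub hr').2.1
  rw [Real.norm_of_nonneg (Real.rpow_nonneg hr.1.le C), Real.norm_of_nonneg hp.le,
    Real.rpow_def_of_pos hr.1, ← Real.exp_log hp, ← Real.exp_add, Real.exp_le_exp]
  linarith

theorem IsPositiveFlat.frequently_lt_mul_logDeriv {p : ℝ → ℝ} (hp : IsPositiveFlat p (𝓝[>] 0))
    (C : ℝ) : ∃ᶠ r in 𝓝[>] 0, C < r * logDeriv p r := by
  intro hle
  obtain ⟨N, hN⟩ := exists_nat_ge C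
  have hlower : (fun r ↦ r ^ N) =O[𝓝[>] 0] p := by
    simpa only [Real.rpow_natCast] using rpow_isBigO_of_mul_logDeriv_le hp.differentiableAt hp.pos
      (hle.mono fun r hr ↦ (not_lt.1 hr).trans hN)
  have hupper : p =O[𝓝[>] 0] fun r ↦ r ^ (N + 1) := by
    refine IsBigO.of_norm_right ?_
    simpa only [norm_pow] using hp.isBigO_norm_pow (N + 1)
  have hlittle : (fun r : ℝ ↦ r ^ (N + 1)) =o[𝓝[>] 0] fun r ↦ r ^ N :=
    (isLittleO_pow_pow N.lt_succ_self).mono nhdsWithin_le_nhds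
  have hne : ∀ᶠ r : ℝ in 𝓝[>] 0, r ^ N ≠ 0 :=
    eventually_mem_nhdsWithin.mono fun r hr ↦ pow_ne_zero N (ne_of_gt hr)
  exact isLittleO_irrefl hne.frequently ((hlower.trans hupper).trans_isLittleO hlittle)

theorem fderiv_eq_two_mul_re_wirtingerR {P : ℂ → ℝ} {z : ℂ} (hP : DifferentiableAt ℝ P z) (v : ℂ) :
    fderiv ℝ P z v = 2 * (wirtingerR P z * v).re := by
  have hcast : HasFDerivAt (fun w ↦ (P w : ℂ)) (ofRealCLM.comp (fderiv ℝ P z)) z :=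
    ofRealCLM.hasFDerivAt.comp z hP.hasFDerivAt
  have hv : fderiv ℝ P z v = v.re * fderiv ℝ P z 1 + v.im * fderiv ℝ P z I := by
    conv_lhs => rw [← re_add_im v, ← mul_one (v.re : ℂ), ← real_smul, ← real_smul, map_add,
      map_smul, map_smul, smul_eq_mul, smul_eq_mul]
  have hhalf : (1 / 2 : ℂ) = (1 / 2 : ℝ) := by push_cast; rfl
  rw [hv, wirtingerR, wirtinger, hcast.fderiv, hhalf, mul_assoc, re_ofReal_mul]
  simp only [ContinuousLinearMap.comp_apply, ofRealCLM_apply, mul_re, sub_re, sub_im, mul_im, I_re,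
    I_im, ofReal_re, ofReal_im]
  ring

/-- An integral curve of the vector field `b z ^ l`, up to real changes of time, that reaches the
origin and is parametrised by its distance `r` to the origin. The real factor `c * r ^ l`, the
reciprocal of the speed of the change of time, has constant sign: `c > 0` if the field points away
from the origin along the curve and `c < 0` if it points towards it. -/
structure IsRadialIntegralCurve (b : ℂ) (l : ℕ) (c : ℝ) (γ : ℝ → ℂ) : Prop where
  ne_zero : c ≠ 0
  norm_eq : ∀ r, 0 < r → ‖γ r‖ = r
  hasDerivAt : ∀ r, 0 < r → HasDerivAt γ (b * γ r ^ l / (c * r ^ l)) r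

namespace IsRadialIntegralCurve

variable {b : ℂ} {l : ℕ} {c : ℝ} {γ : ℝ → ℂ} {P : ℂ → ℝ}

theorem tendsto (hγ : IsRadialIntegralCurve b l c γ) : Tendsto γ (𝓝[>] 0) (𝓝[≠] 0) := by
  refine tendsto_nhdsWithin_iff.2 ⟨?_, ?_⟩
  · refine tendsto_zero_iff_norm_tendsto_zero.2 ?_
    exact (tendsto_id.mono_left nhdsWithin_le_nhds).congr'
      (eventually_mem_nhdsWithin.mono fun r hr ↦ (hγ.norm_eq r hr).symm)
  · filter_upwards [self_mem_nhdsWithin] with r hr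
    exact norm_pos_iff.1 ((hγ.norm_eq r hr).symm ▸ hr)

theorem norm_pow_comp_eventuallyEq (hγ : IsRadialIntegralCurve b l c γ) (N : ℕ) :
    (fun z ↦ ‖z‖ ^ N) ∘ γ =ᶠ[𝓝[>] 0] fun r ↦ r ^ N := by
  filter_upwards [self_mem_nhdsWithin] with r hr
  simp only [Function.comp_apply, hγ.norm_eq r hr]

theorem isPositiveFlat_comp (hγ : IsRadialIntegralCurve b l c γ) (hP : IsPositiveFlat P (𝓝[≠] 0)) :
    IsPositiveFlat (P ∘ γ) (𝓝[>] 0) where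
  differentiableAt := by
    filter_upwards [hγ.tendsto.eventually hP.differentiableAt, self_mem_nhdsWithin] with r hr hr0
    exact hr.comp r (hγ.hasDerivAt r hr0).differentiableAt
  pos := hγ.tendsto.eventually hP.pos
  isBigO_norm_pow N := by
    simpa only [norm_pow] using
      (((hP.isBigO_norm_pow N).comp_tendsto hγ.tendsto).trans_eventuallyEq
        (hγ.norm_pow_comp_eventuallyEq N)).norm_right

theorem mul_logDeriv_comp (hγ : IsRadialIntegralCurve b l c γ) {r : ℝ} (hr : 0 < r)
    (hP : DifferentiableAt ℝ P (γ r)) :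
    r ^ l * logDeriv (P ∘ γ) r = 2 / c * (b * γ r ^ l * wirtingerR P (γ r) / P (γ r)).re := by
  have hfield : wirtingerR P (γ r) * (b * γ r ^ l / (c * r ^ l)) =
      ((c * r ^ l : ℝ) : ℂ)⁻¹ * (b * γ r ^ l * wirtingerR P (γ r)) := by
    push_cast
    ring
  rw [logDeriv_apply, (hP.hasFDerivAt.comp_hasDerivAt r (hγ.hasDerivAt r hr)).deriv,
    fderiv_eq_two_mul_re_wirtingerR hP, hfield, ← ofReal_inv, re_ofReal_mul, div_ofReal_re,
    Function.comp_apply]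
  field_simp

theorem frequently_lt_re_field_mul_wirtingerR_div (hγ : IsRadialIntegralCurve b l c γ)
    (hP : IsPositiveFlat P (𝓝[≠] 0)) (C : ℝ) :
    ∃ᶠ r in 𝓝[>] 0,
      C * r ^ l < r * ((b * γ r ^ l * wirtingerR P (γ r) / P (γ r)).re / c) := by
  refine (((hγ.isPositiveFlat_comp hP).frequently_lt_mul_logDeriv (2 * C)).and_eventually
    ((hγ.tendsto.eventually hP.differentiableAt).and self_mem_nhdsWithin)).mono ?_
  rintro r ⟨hlt, hd, hr : 0 < r⟩
  have hlog := hγ.mul_logDeriv_comp hr hd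
  have hscaled := mul_lt_mul_of_pos_left hlt (pow_pos hr l)
  rw [mul_left_comm _ r, hlog] at hscaled
  have hhalf : r * (2 / c * (b * γ r ^ l * wirtingerR P (γ r) / P (γ r)).re) =
      2 * (r * ((b * γ r ^ l * wirtingerR P (γ r) / P (γ r)).re / c)) := by ring
  linarith

theorem frequently_pos_re_add_div (hγ : IsRadialIntegralCurve b l c γ)
    (hP : IsPositiveFlat P (𝓝[≠] 0)) {g : ℂ → ℝ}
    (hg : (fun z ↦ ‖z‖ * g z) =O[𝓝[≠] 0] fun z ↦ ‖z‖ ^ l) :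
    ∃ᶠ r in 𝓝[>] 0,
      0 < ((b * γ r ^ l * wirtingerR P (γ r) / P (γ r)).re + g (γ r)) / c := by
  obtain ⟨K, hK⟩ := (hg.comp_tendsto hγ.tendsto).bound
  refine ((hγ.frequently_lt_re_field_mul_wirtingerR_div hP (K / |c|)).and_eventually
    (hK.and self_mem_nhdsWithin)).mono ?_
  rintro r ⟨hlt, hbound, hr : 0 < r⟩
  have hgr : -(r * (g (γ r) / c)) ≤ K / |c| * r ^ l := by
    simp only [Function.comp_apply, hγ.norm_eq r hr, norm_pow, Real.norm_of_nonneg hr.le,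
      Real.norm_eq_abs] at hbound
    refine (neg_le_abs _).trans ?_
    rw [← mul_div_assoc, abs_div, div_mul_eq_mul_div]
    gcongr
  refine pos_of_mul_pos_right ?_ hr.le
  rw [add_div, mul_add]
  linarith

theorem not_isBigO (hγ : IsRadialIntegralCurve b l c γ) (hP : IsPositiveFlat P (𝓝[≠] 0)) :
    ¬ (fun z ↦ ‖z‖ * (b * z ^ l * wirtingerR P z / P z).re) =O[𝓝[≠] 0] fun z ↦ ‖z‖ ^ l := by
  intro hO
  have hneg : (fun z ↦ ‖z‖ * -(b * z ^ l * wirtingerR P z / P z).re) =O[𝓝[≠] 0]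
      fun z ↦ ‖z‖ ^ l := by
    simpa only [mul_neg] using hO.neg_left
  simpa using hγ.frequently_pos_re_add_div hP hneg

theorem ray {ω : ℂ} (hω : ‖ω‖ = 1) (hc : c ≠ 0) (hb : b * ω ^ l = c * ω) :
    IsRadialIntegralCurve b l c fun r ↦ r * ω where
  ne_zero := hc
  norm_eq r hr := by rw [norm_mul, hω, mul_one, norm_real, Real.norm_of_nonneg hr.le]
  hasDerivAt r hr := by
    have hcr : (c : ℂ) * r ^ l ≠ 0 := by exact_mod_cast mul_ne_zero hc (pow_pos hr l).ne'
    have hfield : b * (r * ω) ^ l / (c * r ^ l) = 1 * ω := by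
      rw [div_eq_iff hcr, mul_pow]
      linear_combination (r : ℂ) ^ l * hb
    rw [hfield]
    exact (hasDerivAt_id r).ofReal_comp.mul_const ω

theorem logarithmicSpiral (hb : b.re ≠ 0) :
    IsRadialIntegralCurve b 1 b.re fun r ↦ r * exp ((b.im / b.re * Real.log r : ℝ) * I) where
  ne_zero := hb
  norm_eq r hr := by
    rw [norm_mul, norm_exp_ofReal_mul_I, mul_one, norm_real, Real.norm_of_nonneg hr.le]
  hasDerivAt r hr := by
    have hangle : HasDerivAt (fun r : ℝ ↦ b.im / b.re * Real.log r) (b.im / b.re * r⁻¹) r :=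
      (Real.hasDerivAt_log hr.ne').const_mul _
    refine ((hasDerivAt_id r).ofReal_comp.mul (hangle.ofReal_comp.mul_const I).cexp).congr_deriv ?_
    have hr' : (r : ℂ) ≠ 0 := by exact_mod_cast hr.ne'
    have hb' : (b.re : ℂ) ≠ 0 := by exact_mod_cast hb
    push_cast
    simp only [id]
    field_simp
    exact re_add_im b

end IsRadialIntegralCurve

theorem exists_norm_eq_one_and_mul_pow_eq_norm_mul (b : ℂ) {l : ℕ} (hl : l ≠ 1) :
    ∃ ω : ℂ, ‖ω‖ = 1 ∧ b * ω ^ l = ‖b‖ * ω := by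
  have hl' : (1 - l : ℂ) ≠ 0 := sub_ne_zero.2 (by exact_mod_cast hl.symm)
  refine ⟨exp ((b.arg / (1 - l) : ℝ) * I), norm_exp_ofReal_mul_I _, ?_⟩
  nth_rw 1 [← norm_mul_exp_arg_mul_I b]
  rw [mul_assoc, ← exp_nat_mul, ← exp_add]
  congr 2
  push_cast
  field_simp
  ring

theorem exists_isRadialIntegralCurve {b : ℂ} (hb : b ≠ 0) {l : ℕ} (hl : ¬ (l = 1 ∧ b.re = 0)) :
    ∃ c γ, IsRadialIntegralCurve b l c γ := by
  rcases eq_or_ne l 1 with rfl | hl1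
  · exact ⟨_, _, .logarithmicSpiral fun hre ↦ hl ⟨rfl, hre⟩⟩
  · obtain ⟨ω, hω, hbω⟩ := exists_norm_eq_one_and_mul_pow_eq_norm_mul b hl1
    exact ⟨_, _, .ray hω (norm_ne_zero_iff.2 hb) hbω⟩

theorem mul_re_nonpos_of_ray {a b ω : ℂ} {c : ℝ} {l m : ℕ} {P g₁ g₂ : ℂ → ℝ}
    (hP : IsPositiveFlat P (𝓝[≠] 0))
    (hg₁ : (fun z ↦ ‖z‖ * g₁ z) =O[𝓝[≠] 0] fun z ↦ ‖z‖ ^ l)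
    (hg₂ : g₂ =o[𝓝[≠] 0] fun z ↦ ‖z‖ ^ m)
    (heq : ∀ᶠ z in 𝓝[≠] 0,
      (b * z ^ l * wirtingerR P z / P z).re + g₁ z = g₂ z - (a * z ^ m).re)
    (hω : ‖ω‖ = 1) (hbω : b * ω ^ l = c * ω) :
    c * (a * ω ^ m).re ≤ 0 := by
  rcases eq_or_ne c 0 with rfl | hc
  · rw [zero_mul]
  have hray : IsRadialIntegralCurve b l c fun r ↦ r * ω := .ray hω hc hbω
  have hlim : Tendsto (fun r : ℝ ↦ c * (g₂ (r * ω) / r ^ m - (a * ω ^ m).re)) (𝓝[>] 0)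
      (𝓝 (c * (0 - (a * ω ^ m).re))) :=
    ((((hg₂.comp_tendsto hray.tendsto).trans_eventuallyEq
      (hray.norm_pow_comp_eventuallyEq m)).tendsto_div_nhds_zero.sub_const _).const_mul c)
  suffices ∃ᶠ r : ℝ in 𝓝[>] 0, 0 ≤ c * (g₂ (r * ω) / r ^ m - (a * ω ^ m).re) by
    linarith [ge_of_tendsto_of_frequently hlim this]
  refine ((hray.frequently_pos_re_add_div hP hg₁).and_eventually
    ((hray.tendsto.eventually heq).and self_mem_nhdsWithin)).mono ?_
  rintro r ⟨hpos, hr_eq, hr : 0 < r⟩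
  have hpow : (a * (r * ω) ^ m).re = r ^ m * (a * ω ^ m).re := by
    rw [← re_ofReal_mul]
    push_cast
    ring_nf
  have hscale : c * (g₂ (r * ω) / r ^ m - (a * ω ^ m).re) =
      c ^ 2 / r ^ m * ((g₂ (r * ω) - r ^ m * (a * ω ^ m).re) / c) := by
    field_simp
  rw [hr_eq, hpow] at hpos
  rw [hscale]
  positivity

section RootsOfUnity

variable {A ρ : ℂ} {k : ℕ}

theorem re_eq_zero_of_forall_re_mul_pow_nonpos (hk : k ≠ 0) (hρk : ρ ^ k = 1) (hρ : ρ ≠ 1)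
    (h : ∀ j : ℕ, (A * ρ ^ j).re ≤ 0) : A.re = 0 := by
  have hsum : ∑ j ∈ Finset.range k, (A * ρ ^ j).re = 0 := by
    rw [← re_sum, ← Finset.mul_sum, geom_sum_eq hρ, hρk, sub_self, zero_div, mul_zero, zero_re]
  simpa using (Finset.sum_eq_zero_iff_of_nonpos fun j _ ↦ h j).1 hsum 0
    (Finset.mem_range.2 (Nat.pos_of_ne_zero hk))

theorem eq_zero_of_forall_re_mul_pow_nonpos (hk : k ≠ 0) (hρk : ρ ^ k = 1) (hρ : ρ.im ≠ 0)
    (h : ∀ j : ℕ, (A * ρ ^ j).re ≤ 0) : A = 0 := by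
  have hρ1 : ρ ≠ 1 := fun h1 ↦ hρ (by rw [h1, one_im])
  have hA : A.re = 0 := re_eq_zero_of_forall_re_mul_pow_nonpos hk hρk hρ1 h
  have hAρ : (A * ρ).re = 0 := re_eq_zero_of_forall_re_mul_pow_nonpos hk hρk hρ1 fun j ↦ by
    simpa only [pow_succ', mul_assoc] using h (j + 1)
  have him : A.im * ρ.im = 0 := by simpa [hA] using hAρ
  exact Complex.ext hA ((mul_eq_zero.1 him).resolve_right hρ)

theorem exists_pow_eq_neg_one_and_im_pow_pos (hk : k ≠ 0) :
    ∃ ζ : ℂ, ‖ζ‖ = 1 ∧ ζ ^ k = -1 ∧ ∀ m : ℕ, 0 < m → m < k → 0 < (ζ ^ m).im := by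
  have hpow (m : ℕ) : exp ((Real.pi / k : ℝ) * I) ^ m = exp ((m / k * Real.pi : ℝ) * I) := by
    rw [← exp_nat_mul]
    push_cast
    ring_nf
  refine ⟨exp ((Real.pi / k : ℝ) * I), norm_exp_ofReal_mul_I _, ?_, fun m hm hmk ↦ ?_⟩
  · rw [hpow, div_self (Nat.cast_ne_zero.2 hk), one_mul, exp_pi_mul_I]
  · rw [hpow, exp_ofReal_mul_I_im]
    have hfrac : (m / k : ℝ) < 1 := (div_lt_one (by positivity)).2 (by exact_mod_cast hmk)
    exact Real.sin_pos_of_pos_of_lt_pi (by positivity) (mul_lt_of_lt_one_left Real.pi_pos hfrac)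

end RootsOfUnity

/- With `l = k + 1`, multiplying `ω` by a `k`-th root `ζ` of `-1` preserves invariance of the ray
but reverses the field on it, so the constraint on `a` is imposed with alternating sign. -/
theorem eq_zero_or_of_forall_ray_mul_re_nonpos {a b : ℂ} (hb : b ≠ 0) {l m : ℕ} (hml : m + 1 < l)
    (h : ∀ (ω : ℂ) (c : ℝ), ‖ω‖ = 1 → b * ω ^ l = c * ω → c * (a * ω ^ m).re ≤ 0) :
    a = 0 ∨ m = 0 ∧ a.re = 0 := by
  obtain ⟨k, rfl⟩ : ∃ k, l = k + 1 := ⟨l - 1, by omega⟩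
  have hk : k ≠ 0 := by omega
  obtain ⟨ω, hω, hbω⟩ := exists_norm_eq_one_and_mul_pow_eq_norm_mul b (by omega : k + 1 ≠ 1)
  obtain ⟨ζ, hζ, hζk, hζim⟩ := exists_pow_eq_neg_one_and_im_pow_pos hk
  have hrays (j : ℕ) : (a * ω ^ m * (-ζ ^ m) ^ j).re ≤ 0 := by
    have hζj : (ζ ^ j) ^ k = (-1) ^ j := by rw [pow_right_comm, hζk]
    have hfield : b * (ω * ζ ^ j) ^ (k + 1) = ((‖b‖ * (-1) ^ j : ℝ) : ℂ) * (ω * ζ ^ j) := by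
      push_cast
      rw [mul_pow, pow_succ (ζ ^ j), hζj]
      linear_combination (-1) ^ j * ζ ^ j * hbω
    have hsign : a * ω ^ m * (-ζ ^ m) ^ j = ((-1) ^ j : ℝ) * (a * (ω * ζ ^ j) ^ m) := by
      rw [neg_pow]
      push_cast
      ring
    rw [hsign, re_ofReal_mul]
    refine nonpos_of_mul_nonpos_right ?_ (norm_pos_iff.2 hb)
    simpa only [mul_assoc] using h (ω * ζ ^ j) _ (by simp [hω, hζ]) hfield
  have hperiod : (-ζ ^ m) ^ (2 * k) = 1 := by
    rw [pow_mul, neg_sq, pow_right_comm _ 2 k, pow_right_comm ζ m k, hζk, pow_right_comm,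
      neg_one_sq, one_pow]
  have h2k : 2 * k ≠ 0 := by omega
  rcases Nat.eq_zero_or_pos m with rfl | hm
  · right
    simpa using re_eq_zero_of_forall_re_mul_pow_nonpos h2k hperiod (by norm_num) hrays
  · have him : (-ζ ^ m).im ≠ 0 := by
      simpa using (hζim m hm (by omega)).ne'
    have hω0 : ω ≠ 0 := norm_ne_zero_iff.1 (hω ▸ one_ne_zero)
    exact .inl ((mul_eq_zero.1 (eq_zero_of_forall_re_mul_pow_nonpos h2k hperiod him
      hrays)).resolve_right (pow_ne_zero m hω0))

theorem re_eq_of_re_add_one_div_pow_mul_add_eq {p s : ℝ} (hp : p ≠ 0) {n : ℕ} {A B G : ℂ}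
    (h : (A + 1 / (p : ℂ) ^ n * (B + G)).re = s) : B.re = p ^ n * (s - A.re) - G.re := by
  have hscale : 1 / (p : ℂ) ^ n = ((1 / p ^ n : ℝ) : ℂ) := by push_cast; rfl
  rw [hscale, add_re, re_ofReal_mul, add_re] at h
  rw [← h]
  field_simp
  ring

theorem isBigO_norm_mul_pow_mul_sub_sub {a : ℂ} {l m n : ℕ} {P g₁ g₂ : ℂ → ℝ}
    (hP : P =O[𝓝[≠] 0] fun z ↦ ‖z‖ ^ l)
    (hg₁ : (fun z ↦ ‖z‖ * g₁ z) =O[𝓝[≠] 0] fun z ↦ ‖z‖ ^ l)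
    (hg₂ : g₂ =O[𝓝[≠] 0] fun z ↦ ‖z‖ ^ m) (hl : l ≤ 1 + m + l * n) :
    (fun z ↦ ‖z‖ * (P z ^ n * (g₂ z - (a * z ^ m).re) - g₁ z)) =O[𝓝[≠] 0]
      fun z ↦ ‖z‖ ^ l := by
  have hre : (fun z ↦ (a * z ^ m).re) =O[𝓝[≠] 0] fun z ↦ ‖z‖ ^ m :=
    .of_bound ‖a‖ (.of_forall fun z ↦
      (abs_re_le_norm (a * z ^ m)).trans_eq (by simp only [norm_mul, norm_pow, norm_norm]))
  have hmain : (fun z ↦ ‖z‖ * (P z ^ n * (g₂ z - (a * z ^ m).re))) =O[𝓝[≠] 0]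
      fun z : ℂ ↦ ‖z‖ ^ (1 + m + l * n) :=
    ((isBigO_refl (fun z : ℂ ↦ ‖z‖) _).mul ((hP.pow n).mul (hg₂.sub hre))).congr_right
      fun z ↦ by ring
  have hpow : (fun z : ℂ ↦ ‖z‖ ^ (1 + m + l * n)) =O[𝓝[≠] 0] fun z ↦ ‖z‖ ^ l := by
    refine .of_bound 1 ?_
    filter_upwards [nhdsWithin_le_nhds (closedBall_mem_nhds 0 one_pos)] with z hz
    rw [one_mul, norm_pow, norm_pow, norm_norm]
    exact pow_le_pow_of_le_one (norm_nonneg z) (mem_closedBall_zero_iff.1 hz) hl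
  exact ((hmain.trans hpow).sub hg₁).congr_left fun z ↦ by ring

/- The bound on `z * g₁ z` stands for `g₁ z = O(‖z‖ ^ (l - 1))`, with no truncated subtraction at
`l = 0`. -/
theorem statement8_general {P : ℂ → ℝ} (hP : IsPositiveFlat P (𝓝[≠] 0)) {a b : ℂ} {l m n : ℕ}
    {g₁ : ℂ → ℂ} {g₂ : ℂ → ℝ} (hg₁ : (fun z ↦ z * g₁ z) =O[𝓝[≠] (0 : ℂ)] fun z ↦ ‖z‖ ^ l)
    (hg₂ : g₂ =o[𝓝[≠] (0 : ℂ)] fun z ↦ ‖z‖ ^ m)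
    (heq : ∀ᶠ z in 𝓝[≠] (0 : ℂ),
      (a * z ^ m + (1 / (P z : ℂ) ^ n) *
        (b * z ^ l * wirtingerR P z / (P z : ℂ) + g₁ z)).re = g₂ z)
    (hE1 : ¬ (l = 1 ∧ b.re = 0)) (hE2 : ¬ (m = 0 ∧ a.re = 0)) :
    a * b = 0 := by
  rcases eq_or_ne b 0 with rfl | hb
  · rw [mul_zero]
  have hre_g₁ : (fun z ↦ ‖z‖ * (g₁ z).re) =O[𝓝[≠] 0] fun z ↦ ‖z‖ ^ l :=
    (isBigO_of_le _ fun z ↦ by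
      rw [norm_mul, norm_mul, norm_norm]
      gcongr
      exact abs_re_le_norm (g₁ z)).trans hg₁
  have hre : ∀ᶠ z in 𝓝[≠] (0 : ℂ), (b * z ^ l * wirtingerR P z / P z).re =
      P z ^ n * (g₂ z - (a * z ^ m).re) - (g₁ z).re :=
    (heq.and hP.pos).mono fun z hz ↦ re_eq_of_re_add_one_div_pow_mul_add_eq hz.2.ne' hz.1
  rcases le_or_gt l (1 + m + l * n) with hl | hl
  · obtain ⟨c, γ, hγ⟩ := exists_isRadialIntegralCurve hb hE1
    have hO := isBigO_norm_mul_pow_mul_sub_sub (a := a) (hP.isBigO_norm_pow l) hre_g₁ hg₂.isBigO hl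
    exact (hγ.not_isBigO hP (hO.congr' (hre.mono fun z hz ↦ by simp only [hz]) .rfl)).elim
  · obtain rfl : n = 0 := by
      by_contra hn
      have := Nat.le_mul_of_pos_right l (Nat.pos_of_ne_zero hn)
      omega
    have hre₀ : ∀ᶠ z in 𝓝[≠] (0 : ℂ), (b * z ^ l * wirtingerR P z / P z).re + (g₁ z).re =
        g₂ z - (a * z ^ m).re :=
      hre.mono fun z hz ↦ by rw [hz, pow_zero, one_mul, sub_add_cancel]
    rcases eq_zero_or_of_forall_ray_mul_re_nonpos hb (by omega : m + 1 < l)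
      fun ω c hω hbω ↦ mul_re_nonpos_of_ray hP hre_g₁ hg₂ hre₀ hω hbω with rfl | hexc
    · rw [zero_mul]
    · exact (hE2 hexc).elim

/-- **Lemma 3 (Kim–Ninh).** Let P be C^∞, P(0)=0, P > 0 off 0 on the disc, vanishing to
infinite order at 0. Let a, b ∈ ℂ, let ℓ, m, n be nonnegative integers, and let g₁, g₂ be
smooth on the punctured disc Δ*_{ε₀} with (A1) g₁(z) = O(|z|^ℓ) and g₂(z) = o(|z|^m), and
(A2) Re[a z^m + (1/P(z)^n)(b z^ℓ P'(z)/P(z) + g₁(z))] = g₂(z) on Δ*_{ε₀}. If neither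
(E1) ℓ = 1 and Re b = 0, nor (E2) m = 0 and Re a = 0 holds, then ab = 0. -/
theorem statement8 (ε₀ : ℝ) (hε₀ : 0 < ε₀) (P : ℂ → ℝ)
    (hPsm : ContDiffOn ℝ (⊤ : ℕ∞) P (Metric.ball 0 ε₀))
    (hP0 : P 0 = 0)
    (hPpos : ∀ z ∈ Metric.ball (0 : ℂ) ε₀, z ≠ 0 → 0 < P z)
    (hPflat : ∀ n : ℕ, iteratedFDeriv ℝ n P 0 = 0)
    (a b : ℂ) (l m n : ℕ) (g₁ : ℂ → ℂ) (g₂ : ℂ → ℝ)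
    (hg₁sm : ContDiffOn ℝ (⊤ : ℕ∞) g₁ (Metric.ball 0 ε₀ \ {0}))
    (hg₂sm : ContDiffOn ℝ (⊤ : ℕ∞) g₂ (Metric.ball 0 ε₀ \ {0}))
    (hg₁ : g₁ =O[𝓝[≠] (0 : ℂ)] fun z => ‖z‖ ^ l)
    (hg₂ : (fun z => g₂ z) =o[𝓝[≠] (0 : ℂ)] fun z => ‖z‖ ^ m)
    (heq : ∀ z ∈ Metric.ball (0 : ℂ) ε₀ \ {0},
      (a * z ^ m + (1 / (P z : ℂ) ^ n) *
        (b * z ^ l * wirtingerR P z / (P z : ℂ) + g₁ z)).re = g₂ z)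
    (hE1 : ¬ (l = 1 ∧ b.re = 0)) (hE2 : ¬ (m = 0 ∧ a.re = 0)) :
    a * b = 0 := by
  have hball : ball (0 : ℂ) ε₀ ∈ 𝓝 0 := ball_mem_nhds 0 hε₀
  have hP : IsPositiveFlat P (𝓝[≠] 0) := .of_contDiffAt (hPsm.contDiffAt hball)
    (eventually_nhdsWithin_iff.2 (eventually_of_mem hball hPpos)) hPflat
  exact statement8_general hP
    (by simpa using ((tendsto_id.mono_left nhdsWithin_le_nhds).isBigO_one ℝ).mul hg₁) hg₂
    (eventually_of_mem (sdiff_mem_nhdsWithin_compl hball {0}) heq) hE1 hE2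
end

section
/- Let P be a C^∞-smooth real-valued function on a disc {|z| < ε} in ℂ with P(0)=0, P(z) > 0 for all z ≠ 0, and P vanishing to infinite order at 0. Let b be a complex number and k a nonnegative integer, and assume it is not the case that k = 1 and Re b = 0. If Re[b z^k P'(z)] = 0 for all z with |z| < ε, then b = 0. -/
/-!
Since `P` is real-valued, `2 Re (v ∂P/∂z)` is the derivative of `P` at `z` in the direction `v`.
The hypothesis therefore says that `P` is constant along every curve tangent to the vector field
`b z ^ k`. If `b ≠ 0`, one such curve tends to `0`, so `P` takes the value `P 0` on it, which it
does not take off `0`. Up to reparametrization the curve is `s ↦ z exp (a s)` with `Re a < 0`: for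
`k = 1` it is a logarithmic spiral with `a = -b / Re b`, and for `k ≠ 1` it is a ray `a = -1` in a
direction `u` for which `b u ^ k` is a positive multiple of `u`.
-/

open Complex Metric Filter Topology Asymptotics

theorem apply_eq_of_tendsto_of_fderiv_eq_zero {E F : Type*} [NormedAddCommGroup E]
    [NormedSpace ℝ E] [NormedAddCommGroup F] [NormedSpace ℝ F] {f : E → F} {γ γ' : ℝ → E} {x : E}
    (hγ : ∀ s, 0 ≤ s → HasDerivAt γ (γ' s) s)
    (hf : ∀ s, 0 ≤ s → DifferentiableAt ℝ f (γ s))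
    (hzero : ∀ s, 0 ≤ s → fderiv ℝ f (γ s) (γ' s) = 0)
    (hlim : Tendsto γ atTop (𝓝 x)) (hx : ContinuousAt f x) : f (γ 0) = f x := by
  have hderiv : ∀ s, 0 ≤ s → HasDerivAt (f ∘ γ) 0 s := fun s hs =>
    hzero s hs ▸ (hf s hs).hasFDerivAt.comp_hasDerivAt s (hγ s hs)
  have hconst : ∀ T, 0 ≤ T → f (γ T) = f (γ 0) := fun T hT =>
    constant_of_has_deriv_right_zero (f := f ∘ γ)
      (fun s hs => (hderiv s hs.1).continuousAt.continuousWithinAt)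
      (fun s hs => (hderiv s hs.1).hasDerivWithinAt) T ⟨hT, le_rfl⟩
  exact tendsto_nhds_unique_of_eventuallyEq tendsto_const_nhds (hx.tendsto.comp hlim)
    ((eventually_ge_atTop 0).mono fun T hT => (hconst T hT).symm)

/-- The logarithmic spiral through `z` with complex rate `a`: the integral curve of the linear
vector field `w ↦ a * w` starting at `z`. It degenerates to a ray when `a` is real. -/
noncomputable def expSpiral (a z : ℂ) (s : ℝ) : ℂ :=
  z * exp (a * s)

namespace expSpiral

variable {a z : ℂ}

theorem apply_zero : expSpiral a z 0 = z := by simp [expSpiral]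

theorem norm_apply (s : ℝ) : ‖expSpiral a z s‖ = ‖z‖ * Real.exp (a.re * s) := by
  simp [expSpiral, norm_exp]

theorem hasDerivAt (s : ℝ) : HasDerivAt (expSpiral a z) (a * expSpiral a z s) s := by
  have hlin : HasDerivAt (fun t : ℝ => a * (t : ℂ)) a s := by
    simpa only [ofRealCLM_apply, ofReal_one, mul_one] using
      (ofRealCLM.hasDerivAt (x := s)).const_mul a
  exact (hlin.cexp.const_mul z).congr_deriv (by rw [expSpiral]; ring)

theorem tendsto_zero (ha : a.re < 0) : Tendsto (expSpiral a z) atTop (𝓝 0) := by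
  rw [tendsto_zero_iff_norm_tendsto_zero]
  simp_rw [norm_apply]
  simpa only [mul_zero, Function.comp_def, id] using
    (Real.tendsto_exp_atBot.comp (tendsto_id.const_mul_atTop_of_neg ha)).const_mul ‖z‖

theorem mem_ball_diff_zero {ε : ℝ} (ha : a.re ≤ 0) (hz : z ∈ ball (0 : ℂ) ε \ {0}) {s : ℝ}
    (hs : 0 ≤ s) : expSpiral a z s ∈ ball (0 : ℂ) ε \ {0} := by
  refine ⟨?_, mul_ne_zero hz.2 (exp_ne_zero _)⟩
  rw [mem_ball_zero_iff, norm_apply]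
  calc ‖z‖ * Real.exp (a.re * s) ≤ ‖z‖ :=
        mul_le_of_le_one_right (norm_nonneg z)
          (Real.exp_le_one_iff.2 (mul_nonpos_of_nonpos_of_nonneg ha hs))
    _ < ε := mem_ball_zero_iff.1 hz.1

end expSpiral

theorem exists_norm_eq_one_mul_zpow_eq (b : ℂ) {k : ℤ} (hk : k ≠ 1) :
    ∃ u : ℂ, ‖u‖ = 1 ∧ b * u ^ k = ‖b‖ * u := by
  have hk' : ((k - 1 : ℤ) : ℂ) ≠ 0 := Int.cast_ne_zero.2 (sub_ne_zero.2 hk)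
  -- `u` is chosen so that `u ^ (k - 1) = |b| / b`.
  let u : ℂ := exp ((-b.arg / (k - 1 : ℤ) : ℝ) * I)
  have hpow : u ^ (k - 1) = exp (-(b.arg * I)) := by
    rw [← exp_int_mul]
    congr 1
    push_cast at hk' ⊢
    field_simp
  refine ⟨u, norm_exp_ofReal_mul_I _, ?_⟩
  calc b * u ^ k = ‖b‖ * exp (b.arg * I) * (u ^ (k - 1) * u) := by
        rw [norm_mul_exp_arg_mul_I, ← zpow_add_one₀ (exp_ne_zero _), sub_add_cancel]
    _ = ‖b‖ * u := by
        rw [hpow, exp_neg]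
        field_simp [exp_ne_zero]

theorem neg_eq_smul_mul_zpow_of_ray {b u : ℂ} {k : ℤ} (hb : b ≠ 0) (hu : b * u ^ k = ‖b‖ * u)
    {r : ℝ} (hr : r ≠ 0) : -(r * u) = (-r / (r ^ k * ‖b‖) : ℝ) • (b * (r * u) ^ k) := by
  have hb' : (‖b‖ : ℂ) ≠ 0 := ofReal_ne_zero.2 (norm_ne_zero_iff.2 hb)
  have hr' : (r : ℂ) ≠ 0 := ofReal_ne_zero.2 hr
  rw [real_smul, mul_zpow, mul_left_comm b, hu]
  push_cast
  field_simp

theorem exists_expSpiral_tangent_zpow {b : ℂ} {k : ℤ} (hb : b ≠ 0)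
    (hexc : ¬(k = 1 ∧ b.re = 0)) {r : ℝ} (hr : 0 < r) :
    ∃ a z : ℂ, a.re < 0 ∧ ‖z‖ = r ∧
      ∀ s : ℝ, ∃ c : ℝ, a * expSpiral a z s = c • (b * expSpiral a z s ^ k) := by
  by_cases hk : k = 1
  · subst hk
    have hre : b.re ≠ 0 := fun h => hexc ⟨rfl, h⟩
    refine ⟨(-1 / b.re : ℝ) • b, r, ?_, Complex.norm_of_nonneg hr.le, fun s => ⟨-1 / b.re, ?_⟩⟩
    · rw [smul_re, smul_eq_mul, div_mul_cancel₀ _ hre]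
      exact neg_one_lt_zero
    · rw [zpow_one, smul_mul_assoc]
  · obtain ⟨u, hu, hbu⟩ := exists_norm_eq_one_mul_zpow_eq b hk
    refine ⟨-1, r * u, by simp, ?_, fun s => ?_⟩
    · rw [norm_mul, hu, mul_one, Complex.norm_of_nonneg hr.le]
    · have hray : expSpiral (-1) (r * u) s = (r * Real.exp (-s) : ℝ) * u := by
        rw [expSpiral]
        push_cast
        ring_nf
      rw [hray, neg_one_mul]
      exact ⟨_, neg_eq_smul_mul_zpow_of_ray hb hbu (by positivity)⟩

theorem statement11_general (ε : ℝ) (hε : 0 < ε) (P : ℂ → ℝ)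
    (hPdiff : ∀ z ∈ ball (0 : ℂ) ε \ {0}, DifferentiableAt ℝ P z)
    (hPcont : ContinuousAt P 0)
    (hPne : ∀ z ∈ ball (0 : ℂ) ε \ {0}, P z ≠ P 0)
    (b : ℂ) (k : ℤ) (hexc : ¬(k = 1 ∧ b.re = 0))
    (heq : ∀ z ∈ ball (0 : ℂ) ε \ {0}, (b * z ^ k * wirtingerR P z).re = 0) :
    b = 0 := by
  by_contra hb
  obtain ⟨a, z, ha, hz, htangent⟩ := exists_expSpiral_tangent_zpow hb hexc (half_pos hε)
  have hzmem : z ∈ ball (0 : ℂ) ε \ {0} :=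
    ⟨mem_ball_zero_iff.2 (hz ▸ half_lt_self hε), norm_pos_iff.1 (hz ▸ half_pos hε)⟩
  have hmem : ∀ s, 0 ≤ s → expSpiral a z s ∈ ball (0 : ℂ) ε \ {0} := fun _ hs =>
    expSpiral.mem_ball_diff_zero ha.le hzmem hs
  have hzero : ∀ s, 0 ≤ s → fderiv ℝ P (expSpiral a z s) (a * expSpiral a z s) = 0 := by
    intro s hs
    have hfield : fderiv ℝ P (expSpiral a z s) (b * expSpiral a z s ^ k) = 0 := by
      linarith [heq _ (hmem s hs), re_mul_wirtingerR (hPdiff _ (hmem s hs))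
        (b * expSpiral a z s ^ k)]
    obtain ⟨c, hc⟩ := htangent s
    rw [hc, map_smul, hfield, smul_zero]
  have hconst : P (expSpiral a z 0) = P 0 :=
    apply_eq_of_tendsto_of_fderiv_eq_zero (fun s _ => expSpiral.hasDerivAt s)
      (fun s hs => hPdiff _ (hmem s hs)) hzero (expSpiral.tendsto_zero ha) hPcont
  rw [expSpiral.apply_zero] at hconst
  exact hPne z hzmem hconst

/-- **Lemma 6 (Kim–Ninh).** Let P be C^∞ on {|z| < ε} with P(0)=0, P > 0 off 0, vanishing
to infinite order at 0. Let b ∈ ℂ and k a nonnegative integer, excluding the case k = 1 and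
Re b = 0. If Re[b z^k P'(z)] = 0 for all |z| < ε, then b = 0. -/
theorem statement11 (ε : ℝ) (hε : 0 < ε) (P : ℂ → ℝ)
    (hPsm : ContDiffOn ℝ (⊤ : ℕ∞) P (Metric.ball 0 ε))
    (hP0 : P 0 = 0)
    (hPpos : ∀ z ∈ Metric.ball (0 : ℂ) ε, z ≠ 0 → 0 < P z)
    (hPflat : ∀ n : ℕ, iteratedFDeriv ℝ n P 0 = 0)
    (b : ℂ) (k : ℕ) (hexc : ¬ (k = 1 ∧ b.re = 0))
    (heq : ∀ z ∈ Metric.ball (0 : ℂ) ε, (b * z ^ k * wirtingerR P z).re = 0) :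
    b = 0 := by
  have hPdiff : ∀ z ∈ ball (0 : ℂ) ε, DifferentiableAt ℝ P z := fun z hz =>
    (hPsm.contDiffAt (isOpen_ball.mem_nhds hz)).differentiableAt (by simp)
  exact statement11_general ε hε P (fun z hz => hPdiff z hz.1)
    (hPdiff 0 (mem_ball_self hε)).continuousAt (fun z hz => hP0 ▸ (hPpos z hz.1 hz.2).ne')
    b k (by exact_mod_cast hexc) (fun z hz => by exact_mod_cast heq z hz.1)
end
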